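/- arXiv:1109.1200 — 2 statements merged into one kernel-verified Lean document; each statement's English description precedes it below -/
import Mathlib

section
/- Let H be an infinite-dimensional separable complex Hilbert space. If W is a symmetric, countably syndetic subset of U(H), then the set W^506 of products of 506 elements of W contains an open neighborhood of the identity in the strong operator topology. -/
open Pointwise Topology

/-- The strong operator topology on the group of invertible linear isometries of `H`:
the topology of pointwise convergence on `H`. -/
noncomputable def strongOperatorTopology (𝕜 H : Type*) [RCLike 𝕜] [NormedAddCommGroup H]
    [InnerProductSpace 𝕜 H] : TopologicalSpace (H ≃ₗᵢ[𝕜] H) :=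
  TopologicalSpace.induced (fun u => (u : H → H)) Pi.topologicalSpace

/-!
Countable syndeticity enters in two ways. Any uncountable family of unitaries contains two members
`g ≠ h` with `g⁻¹ * h ∈ W ^ 2`. And if a Hilbert basis is cut into infinitely many infinite blocks,
then for one of the blocks every unitary supported on it agrees there with an element of `W ^ 2`:
otherwise counterexamples for the translates `s n • W`, one on each block, glue to a unitary outside
all of them.

The first fact, applied to permutations of a block as in the second, gives a permutation in `W ^ 2`
with an infinite wandering set `R` inside the block. A unitary supported on `R` is a commutator of
this permutation with an infinite product of translates, so it lies in `W ^ 8`. Applied to an almost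
disjoint family of sets of basis vectors, the first fact gives two sets `J₁`, `J₂` with finite
intersection `Φ` whose fixators lie in `W ^ 8` and `W ^ 12`; these generate the fixator of `Φ` in
four steps, so it lies in `W ^ 40`.

Let `e` be the finite family indexed by `Φ`. Applied to a one-parameter family of rotations, the
first fact gives `k ∈ W ^ 2` with `k (e i) = c • e i + s • f i`, `s ≠ 0`, `f` orthonormal and
orthogonal to `e`. The fixators `A` of `e` and `B` of `k ∘ e` lie in `W ^ 40` and `W ^ 44`. A
finite orthonormal family is moved by elements of `A` to exactly those with the same coefficients
along `e`, and likewise for `B`. If `h` moves the vectors `e i` by little, one can connect `e` to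
`h ∘ e` through families with prescribed coefficients along `e` and `f`, which exist as soon as the
matrix of coefficients is a contraction. This gives `h ∈ A * B * A * B * A ⊆ W ^ 208`.
-/

namespace UnitarySteinhaus

section Syndetic

variable {G : Type*} [Group G] {W : Set G}

/-- A subset of a group is countably syndetic if countably many of its left translates cover the
group. Symmetry of `W` is not part of the definition. -/
def IsCountablySyndetic (W : Set G) : Prop :=
  ∃ s : ℕ → G, ∀ g, ∃ n, g ∈ s n • W

theorem IsCountablySyndetic.nonempty (hW : IsCountablySyndetic W) : W.Nonempty := by
  obtain ⟨s, hs⟩ := hW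
  obtain ⟨n, w, hw, -⟩ := hs 1
  exact ⟨w, hw⟩

theorem mul_mem_pow_add {a b : G} {m n : ℕ} (ha : a ∈ W ^ m) (hb : b ∈ W ^ n) :
    a * b ∈ W ^ (m + n) := by
  rw [pow_add]
  exact Set.mul_mem_mul ha hb

theorem inv_mem_pow (hsym : W⁻¹ = W) {a : G} {m : ℕ} (ha : a ∈ W ^ m) : a⁻¹ ∈ W ^ m := by
  rwa [← Set.mem_inv, ← inv_pow, hsym]

theorem inv_mul_mem_sq (hsym : W⁻¹ = W) {a b : G} (ha : a ∈ W) (hb : b ∈ W) :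
    a⁻¹ * b ∈ W ^ 2 := by
  rw [pow_two]
  exact Set.mul_mem_mul (hsym ▸ Set.inv_mem_inv.mpr ha) hb

theorem mem_pow_of_conj_mem_pow (hsym : W⁻¹ = W) {k u : G} {l m : ℕ} (hk : k ∈ W ^ l)
    (hu : k⁻¹ * u * k ∈ W ^ m) : u ∈ W ^ (l + m + l) := by
  simpa [mul_assoc] using mul_mem_pow_add (mul_mem_pow_add hk hu) (inv_mem_pow hsym hk)

theorem commutator_mem_pow (hsym : W⁻¹ = W) {h v : G} {l m : ℕ} (hh : h ∈ W ^ l)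
    (hv : v ∈ W ^ m) : h * v * h⁻¹ * v⁻¹ ∈ W ^ (l + m + l + m) :=
  mul_mem_pow_add (mul_mem_pow_add (mul_mem_pow_add hh hv) (inv_mem_pow hsym hh))
    (inv_mem_pow hsym hv)

theorem pow_subset_pow_add_two_mul (hsym : W⁻¹ = W) (hne : W.Nonempty) (m k : ℕ) :
    W ^ m ⊆ W ^ (m + 2 * k) := by
  obtain ⟨w, hw⟩ := hne
  have one_mem : (1 : G) ∈ W ^ 2 := inv_mul_cancel w ▸ inv_mul_mem_sq hsym hw hw
  intro a ha
  rw [← mul_one a]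
  exact mul_mem_pow_add ha (pow_mul W 2 k ▸ Set.one_mem_pow one_mem)

theorem IsCountablySyndetic.exists_ne_inv_mul_mem_sq {α : Type*} [Uncountable α]
    (hW : IsCountablySyndetic W) (hsym : W⁻¹ = W) (f : α → G) :
    ∃ x y, x ≠ y ∧ (f x)⁻¹ * f y ∈ W ^ 2 := by
  obtain ⟨s, hs⟩ := hW
  choose n w hw hf using fun x => hs (f x)
  obtain ⟨x, y, hxy, hne⟩ := Function.not_injective_iff.mp (not_injective_uncountable_countable n)
  refine ⟨x, y, hne, ?_⟩
  rw [← hf x, ← hf y, ← hxy]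
  simpa [mul_assoc] using inv_mul_mem_sq hsym (hw x) (hw y)

end Syndetic

section Permutations

variable {ι : Type*}

instance uncountable_set_nat : Uncountable (Set ℕ) := by
  rw [← not_countable_iff]
  intro
  obtain ⟨f, hf⟩ := exists_surjective_nat (Set ℕ)
  exact Function.cantor_surjective f hf

theorem exists_pairwise_disjoint_infinite (ι : Type*) [Countable ι] [Infinite ι] :
    ∃ S : ℕ → Set ι, Pairwise (Function.onFun Disjoint S) ∧ ∀ n, (S n).Infinite := by
  obtain ⟨e⟩ := nonempty_equiv_of_countable (α := ℕ × ℕ) (β := ι)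
  refine ⟨fun n => {i | (e.symm i).1 = n}, fun m n hmn => Set.disjoint_left.mpr ?_, fun n =>
    Set.infinite_of_injective_forall_mem (f := fun k => e (n, k)) ?_ (by simp)⟩
  · rintro i rfl hi
    exact hmn hi
  · intro k l h
    simpa using h

/-- A set `R` is wandering for a permutation `σ` if its translates `σ ^ n • R`, `n : ℤ`, are
pairwise disjoint. -/
def IsWandering (σ : Equiv.Perm ι) (R : Set ι) : Prop :=
  ∀ n : ℤ, ∀ i ∈ R, (σ ^ n) i ∈ R → n = 0

theorem IsWandering.pairwise_disjoint {σ : Equiv.Perm ι} {R : Set ι} (h : IsWandering σ R) :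
    Pairwise (Function.onFun Disjoint fun n : ℕ => σ ^ n • R) := by
  refine fun m n hmn => Set.disjoint_left.mpr ?_
  rintro _ ⟨i, hi, rfl⟩ ⟨j, hj, hij⟩
  have hmem : (σ ^ (m - n : ℤ)) i ∈ R := by
    have hij : (σ ^ n) j = (σ ^ m) i := hij
    rwa [sub_eq_neg_add, zpow_add, zpow_neg, Equiv.Perm.mul_apply, zpow_natCast, zpow_natCast,
      ← hij, Equiv.Perm.inv_def, Equiv.symm_apply_apply]
  exact hmn (by simpa [sub_eq_zero] using h _ i hi hmem)

theorem IsWandering.infinite_compl {σ : Equiv.Perm ι} {R : Set ι} (h : IsWandering σ R)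
    (hR : R.Infinite) : Rᶜ.Infinite := by
  refine (hR.image σ.injective.injOn).mono ?_
  rintro _ ⟨i, hi, rfl⟩ hi'
  exact one_ne_zero (h 1 i hi (by simpa using hi'))

/-- The action of `ℕ → ℤ` on `ℕ × ℤ × ℕ` that translates the slice over `i` by `t i`. -/
def columnShift : Multiplicative (ℕ → ℤ) →* Equiv.Perm (ℕ × ℤ × ℕ) :=
  MonoidHom.mk' (fun t =>
    { toFun p := (p.1, p.2.1 + t.toAdd p.1, p.2.2)
      invFun p := (p.1, p.2.1 - t.toAdd p.1, p.2.2)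
      left_inv p := by simp
      right_inv p := by simp }) fun t t' => by
    ext p : 1
    simp [add_comm, add_left_comm]

theorem columnShift_apply (t : ℕ → ℤ) (p : ℕ × ℤ × ℕ) :
    columnShift (.ofAdd t) p = (p.1, p.2.1 + t p.1, p.2.2) := rfl

theorem isWandering_columnShift {t : ℕ → ℤ} {i : ℕ} (hi : t i ≠ 0) :
    IsWandering (columnShift (.ofAdd t)) {p | p.1 = i ∧ p.2.1 = 0} := by
  rintro n ⟨_, _, j⟩ ⟨rfl, rfl⟩ hn
  rw [← map_zpow, ← ofAdd_zsmul, columnShift_apply] at hn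
  simpa [hi] using hn.2

theorem IsWandering.extendDomain {α : Type*} {σ : Equiv.Perm α} {R : Set α}
    (h : IsWandering σ R) {p : ι → Prop} [DecidablePred p] (f : α ≃ Subtype p) :
    IsWandering (σ.extendDomain f) ((fun a => (f a : ι)) '' R) := by
  rintro n _ ⟨a, ha, rfl⟩ hn
  rw [← Equiv.Perm.extendDomain_zpow, Equiv.Perm.extendDomain_apply_image] at hn
  obtain ⟨c, hc, hca⟩ := hn
  exact h n a ha (f.injective (Subtype.ext hca) ▸ hc)

theorem exists_perm_family_isWandering [Countable ι] {S : Set ι} (hS : S.Infinite) :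
    ∃ σ : Set ℕ → Equiv.Perm ι, (∀ x, ∀ i ∉ S, σ x i = i) ∧
      ∀ x y, x ≠ y → ∃ R ⊆ S, R.Infinite ∧ IsWandering ((σ x)⁻¹ * σ y) R := by
  classical
  have := hS.to_subtype
  obtain ⟨f⟩ := nonempty_equiv_of_countable (α := ℕ × ℤ × ℕ) (β := S)
  let t (x : Set ℕ) : Multiplicative (ℕ → ℤ) := .ofAdd (x.indicator 1)
  refine ⟨fun x => (columnShift (t x)).extendDomain f, fun x i hi =>
    Equiv.Perm.extendDomain_apply_not_subtype _ _ hi, fun x y hxy => ?_⟩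
  obtain ⟨i, hi⟩ : ∃ i, (-x.indicator 1 + y.indicator 1 : ℕ → ℤ) i ≠ 0 := by
    exact Function.ne_iff.mp fun h => hxy (Set.indicator_one_inj ℤ (neg_add_eq_zero.mp h))
  have hσ : ((columnShift (t x)).extendDomain f)⁻¹ * (columnShift (t y)).extendDomain f =
      (columnShift (.ofAdd (-x.indicator 1 + y.indicator 1))).extendDomain f := by
    rw [Equiv.Perm.extendDomain_inv, Equiv.Perm.extendDomain_mul, ← map_inv, ← map_mul]
    rfl
  refine ⟨_, ?_, ?_, hσ ▸ (isWandering_columnShift hi).extendDomain f⟩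
  · rintro _ ⟨p, -, rfl⟩
    exact (f p).2
  · refine Set.infinite_of_injective_forall_mem (f := fun j => (f (i, 0, j) : ι)) ?_ ?_
    · intro j k h
      simpa using f.injective (Subtype.ext h)
    · exact fun j => ⟨_, ⟨rfl, rfl⟩, rfl⟩

theorem exists_perm_smul_eq [Countable ι] {S T : Set ι} (hS : S.Infinite) (hS' : Sᶜ.Infinite)
    (hT : T.Infinite) (hT' : Tᶜ.Infinite) : ∃ σ : Equiv.Perm ι, σ • S = T := by
  classical
  have := hS.to_subtype
  have := hS'.to_subtype
  have := hT.to_subtype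
  have := hT'.to_subtype
  obtain ⟨e⟩ := nonempty_equiv_of_countable (α := S) (β := T)
  obtain ⟨e'⟩ := nonempty_equiv_of_countable (α := (Sᶜ : Set ι)) (β := (Tᶜ : Set ι))
  let σ : Equiv.Perm ι := Equiv.subtypeCongr e e'
  have hσ : ∀ i, σ i ∈ T ↔ i ∈ S := fun i => by
    by_cases hi : i ∈ S
    · simp [σ, Equiv.subtypeCongr, Equiv.sumCompl_symm_apply_of_pos, hi]
    · have hi' : σ i = e' ⟨i, hi⟩ := by
        simp [σ, Equiv.subtypeCongr, Equiv.sumCompl_symm_apply_of_neg, hi]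
      exact iff_of_false (hi' ▸ (e' ⟨i, hi⟩).2) hi
  refine ⟨σ, Set.ext fun i => ?_⟩
  rw [Set.mem_smul_set_iff_inv_smul_mem, ← hσ]
  simp

theorem exists_almost_disjoint_family (ι : Type*) [Countable ι] [Infinite ι] :
    ∃ A : Set ℕ → Set ι, (∀ x, (A x).Infinite) ∧ (∀ x y, (A x ∪ A y)ᶜ.Infinite) ∧
      ∀ x y, x ≠ y → (A x ∩ A y).Finite := by
  classical
  obtain ⟨e⟩ := nonempty_equiv_of_countable (α := ℕ × Finset ℕ) (β := ι)
  refine ⟨fun x => Set.range fun n => e (n, {k ∈ Finset.range n | k ∈ x}), fun x => ?_,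
    fun x y => ?_, fun x y hxy => ?_⟩
  · exact Set.infinite_range_of_injective fun m n h => congrArg Prod.fst (e.injective h)
  · refine Set.infinite_of_injective_forall_mem (f := fun n => e (n, {n})) ?_ ?_
    · exact fun m n h => congrArg Prod.fst (e.injective h)
    · rintro n (⟨m, h⟩ | ⟨m, h⟩) <;>
      · obtain ⟨rfl, h⟩ := Prod.ext_iff.mp (e.injective h)
        simpa using Finset.ext_iff.mp h m
  · obtain ⟨k, hk⟩ : ∃ k, ¬(k ∈ x ↔ k ∈ y) := not_forall.mp fun h => hxy (Set.ext h)
    refine ((Set.finite_Iic k).image fun n => e (n, {k ∈ Finset.range n | k ∈ x})).subset ?_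
    rintro _ ⟨⟨n, rfl⟩, m, h⟩
    obtain ⟨rfl, h⟩ := Prod.ext_iff.mp (e.injective h)
    refine ⟨m, Set.mem_Iic.mpr (not_lt.mp fun hkm => hk ?_), rfl⟩
    simpa [hkm] using (Finset.ext_iff.mp h k).symm

theorem exists_perm_family_inter_finite [Countable ι] {J : Set ι} (hJ : J.Infinite)
    (hJ' : Jᶜ.Infinite) : ∃ σ : Set ℕ → Equiv.Perm ι, ∀ x y, x ≠ y →
      (J ∩ ((σ x)⁻¹ * σ y) • J).Finite ∧ (J ∪ ((σ x)⁻¹ * σ y) • J)ᶜ.Infinite := by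
  have : Infinite ι := Set.infinite_univ_iff.mp (hJ.mono (Set.subset_univ J))
  obtain ⟨A, hA, hA', hAfin⟩ := exists_almost_disjoint_family ι
  choose σ hσ using fun x => exists_perm_smul_eq hJ hJ' (hA x) (by simpa using hA' x x)
  refine ⟨σ, fun x y hxy => ?_⟩
  have hx : J = (σ x)⁻¹ • A x := by rw [← hσ x, inv_smul_smul]
  have hy : ((σ x)⁻¹ * σ y) • J = (σ x)⁻¹ • A y := by rw [mul_smul, hσ y]
  rw [hy, hx, ← Set.smul_set_inter, ← Set.smul_set_union, ← Set.smul_set_compl]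
  exact ⟨(hAfin x y hxy).smul_set, (hA' x y).smul_set⟩

end Permutations

open scoped InnerProductSpace
open Submodule

variable {𝕜 H ι κ : Type*} [RCLike 𝕜] [NormedAddCommGroup H] [InnerProductSpace 𝕜 H]

section HilbertBasis

theorem mem_orthogonal_span {s : Set H} {x : H} :
    x ∈ (span 𝕜 s)ᗮ ↔ ∀ y ∈ s, ⟪y, x⟫_𝕜 = 0 := by
  refine ⟨fun h y hy => h y (subset_span hy), fun h y hy => ?_⟩
  have : span 𝕜 s ≤ (𝕜 ∙ x)ᗮ :=
    span_le.mpr fun z hz => mem_orthogonal_singleton_iff_inner_left.mpr (h z hz)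
  exact mem_orthogonal_singleton_iff_inner_left.mp (this hy)

theorem mem_orthogonal_span_range {v : ι → H} {x : H} :
    x ∈ (span 𝕜 (Set.range v))ᗮ ↔ ∀ i, ⟪v i, x⟫_𝕜 = 0 := by
  rw [mem_orthogonal_span, Set.forall_mem_range]

theorem orthogonal_span_hilbertBasis (b : HilbertBasis ι 𝕜 H) :
    (span 𝕜 (Set.range b))ᗮ = ⊥ := by
  rw [← orthogonal_closure, b.dense_span, top_orthogonal_eq_bot]

theorem eq_of_eq_on_hilbertBasis (b : HilbertBasis ι 𝕜 H) {g h : H ≃ₗᵢ[𝕜] H}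
    (hgh : ∀ i, g (b i) = h (b i)) : g = h := by
  have : (g : H →L[𝕜] H) = h := ContinuousLinearMap.ext_on (s := Set.range b)
    (dense_iff_topologicalClosure_eq_top.mpr b.dense_span) (by rintro _ ⟨i, rfl⟩; exact hgh i)
  exact LinearIsometryEquiv.ext fun x => DFunLike.congr_fun this x

/-- The unitary operator carrying one Hilbert basis to another. -/
noncomputable def basisChange (b b' : HilbertBasis ι 𝕜 H) : H ≃ₗᵢ[𝕜] H :=
  b.repr.trans b'.repr.symm

@[simp]
theorem basisChange_apply (b b' : HilbertBasis ι 𝕜 H) (i : ι) :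
    basisChange b b' (b i) = b' i := by
  classical
  simp [basisChange, b.repr_self]

variable [CompleteSpace H]

/-- The Hilbert basis `b ∘ e`. -/
noncomputable def reindexBasis (b : HilbertBasis ι 𝕜 H) (e : κ ≃ ι) : HilbertBasis κ 𝕜 H :=
  .mkOfOrthogonalEqBot (b.orthonormal.comp e e.injective) <| by
    rw [e.surjective.range_comp, orthogonal_span_hilbertBasis]

@[simp]
theorem reindexBasis_apply (b : HilbertBasis ι 𝕜 H) (e : κ ≃ ι) (k : κ) :
    reindexBasis b e k = b (e k) :=
  congrFun (HilbertBasis.coe_mkOfOrthogonalEqBot _ _) k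

/-- The unitary representation of the permutations of the index set of a Hilbert basis. -/
noncomputable def permUnitary (b : HilbertBasis ι 𝕜 H) : Equiv.Perm ι →* (H ≃ₗᵢ[𝕜] H) :=
  MonoidHom.mk' (fun σ => basisChange b (reindexBasis b σ)) fun σ τ =>
    eq_of_eq_on_hilbertBasis b fun i => by simp

@[simp]
theorem permUnitary_apply (b : HilbertBasis ι 𝕜 H) (σ : Equiv.Perm ι) (i : ι) :
    permUnitary b σ (b i) = b (σ i) := by
  simp [permUnitary]

end HilbertBasis

section Fixator

variable (𝕜) in
/-- The unitary operators that fix every `v i` with `i ∈ S`. -/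
def fixator (v : ι → H) (S : Set ι) : Subgroup (H ≃ₗᵢ[𝕜] H) where
  carrier := {g | ∀ i ∈ S, g (v i) = v i}
  mul_mem' hg hh i hi := by simp [hh i hi, hg i hi]
  one_mem' _ _ := rfl
  inv_mem' {g} hg i hi := by
    rw [LinearIsometryEquiv.coe_inv, LinearIsometryEquiv.symm_apply_eq, hg i hi]

theorem conj_mem_fixator_iff {v : ι → H} {S : Set ι} {k u : H ≃ₗᵢ[𝕜] H} :
    k⁻¹ * u * k ∈ fixator 𝕜 v S ↔ u ∈ fixator 𝕜 (fun i => k (v i)) S := by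
  refine forall₂_congr fun i _ => ?_
  simp [LinearIsometryEquiv.symm_apply_eq]

theorem apply_eq_self_of_mem_fixator (b : HilbertBasis ι 𝕜 H) {S : Set ι} {g : H ≃ₗᵢ[𝕜] H}
    (hg : g ∈ fixator 𝕜 b S) {y : H} (hy : ∀ i ∉ S, ⟪b i, y⟫_𝕜 = 0) : g y = y := by
  refine ((b.hasSum_repr y).mapL (g : H →L[𝕜] H)).unique ?_
  convert b.hasSum_repr y using 2 with i
  by_cases hi : i ∈ S
  · simp [hg i hi]
  · simp [b.repr_apply_apply, hy i hi]

theorem apply_apply_of_mem_fixator (b : HilbertBasis ι 𝕜 H) {S T : Set ι}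
    (hST : S ∪ T = Set.univ) {g h : H ≃ₗᵢ[𝕜] H} (hg : g ∈ fixator 𝕜 b S)
    (hh : h ∈ fixator 𝕜 b T) {i : ι} (hi : i ∈ S) : g (h (b i)) = h (b i) := by
  refine apply_eq_self_of_mem_fixator b hg fun j hj => ?_
  rw [← hh j ((hST.ge (Set.mem_univ j)).resolve_left hj), LinearIsometryEquiv.inner_map_map]
  exact b.orthonormal.2 (ne_of_mem_of_not_mem hi hj).symm

theorem commute_of_mem_fixator (b : HilbertBasis ι 𝕜 H) {S T : Set ι}
    (hST : S ∪ T = Set.univ) {g h : H ≃ₗᵢ[𝕜] H} (hg : g ∈ fixator 𝕜 b S)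
    (hh : h ∈ fixator 𝕜 b T) : Commute g h := by
  refine eq_of_eq_on_hilbertBasis b fun i => ?_
  rcases hST.ge (Set.mem_univ i) with hi | hi
  · simp [hg i hi, apply_apply_of_mem_fixator b hST hg hh hi]
  · simp [hh i hi, apply_apply_of_mem_fixator b (Set.union_comm T S ▸ hST) hh hg hi]

/-- Two operators agreeing on the support of `v` differ by an operator commuting with `v`. -/
theorem commutator_eq_of_eq_on (b : HilbertBasis ι 𝕜 H) {S : Set ι} {v D h : H ≃ₗᵢ[𝕜] H}
    (hv : v ∈ fixator 𝕜 b Sᶜ) (hD : ∀ i ∈ S, h (b i) = D (b i)) :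
    D * v * D⁻¹ * v⁻¹ = h * v * h⁻¹ * v⁻¹ := by
  have hz : D⁻¹ * h ∈ fixator 𝕜 b S := fun i hi => by simp [hD i hi]
  have hcomm : D⁻¹ * h * v = v * (D⁻¹ * h) :=
    commute_of_mem_fixator b (Set.union_compl_self S) hz hv
  calc D * v * D⁻¹ * v⁻¹ = D * (v * (D⁻¹ * h)) * h⁻¹ * v⁻¹ := by group
    _ = h * v * h⁻¹ * v⁻¹ := by rw [← hcomm]; group

variable [CompleteSpace H]

theorem exists_glue_of_fibers {ν : Type*} (b : HilbertBasis ι 𝕜 H) (π : ι → ν)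
    {g : ν → H ≃ₗᵢ[𝕜] H} (hg : ∀ n, g n ∈ fixator 𝕜 b {i | π i ≠ n}) :
    ∃ D : H ≃ₗᵢ[𝕜] H, ∀ i, D (b i) = g (π i) (b i) := by
  have orthonormal : Orthonormal 𝕜 fun i => g (π i) (b i) := by
    refine ⟨fun i => by simp [b.orthonormal.1], fun i j hij => ?_⟩
    change ⟪g (π i) (b i), g (π j) (b j)⟫_𝕜 = 0
    by_cases h : π i = π j
    · rw [h, LinearIsometryEquiv.inner_map_map, b.orthonormal.2 hij]
    · have hunion : {k | π k ≠ π i} ∪ {k | π k ≠ π j} = Set.univ :=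
        Set.eq_univ_of_forall fun k => or_iff_not_imp_left.mpr fun hk hk' =>
          h ((not_not.mp hk).symm.trans hk')
      rw [← apply_apply_of_mem_fixator b hunion (hg _) (hg _) (Ne.symm h),
        LinearIsometryEquiv.inner_map_map, ← hg (π j) i h, LinearIsometryEquiv.inner_map_map,
        b.orthonormal.2 hij]
  have total : (span 𝕜 (Set.range fun i => g (π i) (b i)))ᗮ = ⊥ := by
    rw [eq_bot_iff, ← orthogonal_span_hilbertBasis b]
    intro x hx
    rw [mem_orthogonal_span_range] at hx ⊢
    have hfix : ∀ n, g n ((g n)⁻¹ x) = (g n)⁻¹ x := fun n => by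
      refine apply_eq_self_of_mem_fixator b (hg n) fun i hi => ?_
      obtain rfl : π i = n := not_not.mp hi
      rw [← (g (π i)).inner_map_map]
      simpa using hx i
    intro i
    rw [← (g (π i)).inner_map_map, ← hx i]
    congr 1
    simpa using congrArg (g (π i)) (hfix (π i))
  exact ⟨basisChange b (.mkOfOrthogonalEqBot orthonormal total), fun i => by simp⟩

theorem exists_glue {ν : Type*} (b : HilbertBasis ι 𝕜 H) {S : ν → Set ι}
    (hS : Pairwise (Function.onFun Disjoint S)) {g : ν → H ≃ₗᵢ[𝕜] H}
    (hg : ∀ n, g n ∈ fixator 𝕜 b (S n)ᶜ) :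
    ∃ D ∈ fixator 𝕜 b (⋃ n, S n)ᶜ, ∀ n, ∀ i ∈ S n, D (b i) = g n (b i) := by
  have hπ : ∀ i, ∃ o : Option ν, ∀ n, o = some n ↔ i ∈ S n := fun i => by
    by_cases h : ∃ n, i ∈ S n
    · obtain ⟨n, hn⟩ := h
      refine ⟨some n, fun m => ⟨fun h => Option.some.inj h ▸ hn, fun hm => ?_⟩⟩
      exact congrArg some (not_imp_comm.mp (@hS n m) (Set.not_disjoint_iff.mpr ⟨i, hn, hm⟩))
    · exact ⟨none, fun n => iff_of_false (by simp) (not_exists.mp h n)⟩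
  choose π hπ using hπ
  obtain ⟨D, hD⟩ := exists_glue_of_fibers b π (g := fun o => o.elim 1 g) fun o i hi => by
    cases o with
    | none => rfl
    | some n => exact hg n i (mt (hπ i n).mpr hi)
  refine ⟨D, fun i hi => ?_, fun n i hi => by rw [hD, (hπ i n).mpr hi, Option.elim_some]⟩
  have : π i = none := Option.eq_none_iff_forall_ne_some.mpr fun n hn =>
    hi (Set.mem_iUnion.mpr ⟨n, (hπ i n).mp hn⟩)
  rw [hD, this]
  rfl

end Fixator

section Blocks

variable [CompleteSpace H] {W : Set (H ≃ₗᵢ[𝕜] H)}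

theorem IsCountablySyndetic.exists_full_block (hW : IsCountablySyndetic W) (hsym : W⁻¹ = W)
    (b : HilbertBasis ι 𝕜 H) {S : ℕ → Set ι} (hS : Pairwise (Function.onFun Disjoint S)) :
    ∃ n, ∀ D ∈ fixator 𝕜 b (S n)ᶜ, ∃ h ∈ W ^ 2, ∀ i ∈ S n, h (b i) = D (b i) := by
  obtain ⟨s, hs⟩ := hW
  obtain ⟨n, hn⟩ : ∃ n, ∀ D ∈ fixator 𝕜 b (S n)ᶜ,
      ∃ w ∈ W, ∀ i ∈ S n, (s n * w) (b i) = D (b i) := by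
    by_contra! hcon
    choose D hD hDW using hcon
    obtain ⟨E, -, hE⟩ := exists_glue b hS hD
    obtain ⟨n, w, hw, rfl⟩ := hs E
    obtain ⟨i, hi, hne⟩ := hDW n w hw
    exact hne (hE n i hi)
  refine ⟨n, fun D hD => ?_⟩
  obtain ⟨w, hw, hwD⟩ := hn D hD
  obtain ⟨w₁, hw₁, hw₁D⟩ := hn 1 (one_mem _)
  have hcomm : Commute (s n * w₁) D :=
    commute_of_mem_fixator b (Set.union_compl_self _) hw₁D hD
  refine ⟨w₁⁻¹ * w, inv_mul_mem_sq hsym hw₁ hw, fun i hi => ?_⟩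
  calc (w₁⁻¹ * w) (b i) = (s n * w₁)⁻¹ ((s n * w) (b i)) := by simp
    _ = (s n * w₁)⁻¹ (D ((s n * w₁) (b i))) := by rw [hwD i hi, hw₁D i hi]; rfl
    _ = ((s n * w₁)⁻¹ * (D * (s n * w₁))) (b i) := rfl
    _ = D (b i) := by rw [← hcomm.eq, inv_mul_cancel_left]

theorem conj_permUnitary_mem_fixator (b : HilbertBasis ι 𝕜 H) (σ : Equiv.Perm ι) {S : Set ι}
    {u : H ≃ₗᵢ[𝕜] H} (hu : u ∈ fixator 𝕜 b S) :
    permUnitary b σ * u * (permUnitary b σ)⁻¹ ∈ fixator 𝕜 b (σ • S) := by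
  rintro _ ⟨i, hi, rfl⟩
  have hinv : (permUnitary b σ)⁻¹ (b (σ i)) = b i := by simp [← map_inv]
  change permUnitary b σ (u ((permUnitary b σ)⁻¹ (b (σ i)))) = b (σ i)
  rw [hinv, hu i hi, permUnitary_apply]

theorem permUnitary_mem_fixator (b : HilbertBasis ι 𝕜 H) {σ : Equiv.Perm ι} {S : Set ι}
    (hσ : σ ∈ fixingSubgroup (Equiv.Perm ι) S) : permUnitary b σ ∈ fixator 𝕜 b S :=
  fun i hi => (permUnitary_apply b σ i).trans (congrArg b ((mem_fixingSubgroup_iff _).mp hσ i hi))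

theorem smul_subset_of_mem_fixingSubgroup_compl {σ : Equiv.Perm ι} {R S : Set ι} (hRS : R ⊆ S)
    (hσ : σ ∈ fixingSubgroup (Equiv.Perm ι) Sᶜ) : σ • R ⊆ S := by
  rintro _ ⟨i, hi, rfl⟩
  by_contra hmem
  have hfix : σ (σ i) = σ i := (mem_fixingSubgroup_iff _).mp hσ _ hmem
  exact hmem (by simpa [σ.injective hfix] using hRS hi)

/-- `D` is the infinite product of the conjugates of `u` by the powers of `permUnitary b σ`,
so that conjugating `D` by `permUnitary b σ` cancels all the factors but `u`. -/
theorem exists_eq_commutator_of_isWandering (b : HilbertBasis ι 𝕜 H) {σ : Equiv.Perm ι}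
    {R : Set ι} (hR : IsWandering σ R) {u : H ≃ₗᵢ[𝕜] H} (hu : u ∈ fixator 𝕜 b Rᶜ) :
    ∃ D ∈ fixator 𝕜 b (⋃ n : ℕ, σ ^ n • R)ᶜ,
      u = D * permUnitary b σ * D⁻¹ * (permUnitary b σ)⁻¹ := by
  set v := permUnitary b σ with hv
  let g (n : ℕ) : H ≃ₗᵢ[𝕜] H := v ^ n * u * (v ^ n)⁻¹
  have hg : ∀ n, g n ∈ fixator 𝕜 b (σ ^ n • R)ᶜ := fun n => by
    simpa only [g, hv, map_pow, Set.smul_set_compl] using conj_permUnitary_mem_fixator b (σ ^ n) hu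
  obtain ⟨D, hD, hDg⟩ := exists_glue b hR.pairwise_disjoint hg
  have hvb : ∀ i, v (b i) = b (σ i) := permUnitary_apply b σ
  suffices key : D * v = u * v * D from ⟨D, hD, by rw [key]; group⟩
  refine eq_of_eq_on_hilbertBasis b fun i => ?_
  change D (v (b i)) = u (v (D (b i)))
  rw [hvb]
  by_cases hi : ∃ n : ℕ, i ∈ σ ^ n • R
  · obtain ⟨n, hn⟩ := hi
    have hσi : σ i ∈ σ ^ (n + 1) • R := by
      rw [pow_succ', mul_smul]
      exact Set.smul_mem_smul_set hn
    have hdisj : Disjoint R (σ ^ (n + 1) • R) := by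
      simpa [Function.onFun] using hR.pairwise_disjoint n.succ_ne_zero.symm
    have hgv : g (n + 1) * v = v * g n := by simp only [g]; group
    have hgb : v (g n (b i)) = g (n + 1) (b (σ i)) := by
      rw [← hvb]
      exact (DFunLike.congr_fun hgv (b i)).symm
    rw [hDg _ _ hσi, hDg _ _ hn, hgb]
    refine (apply_apply_of_mem_fixator b ?_ hu (hg _) (hdisj.notMem_of_mem_right hσi)).symm
    rw [← Set.compl_inter, hdisj.inter_eq, Set.compl_empty]
  · rw [hD i (by simpa using hi), hvb]
    by_cases hσi : σ i ∈ R
    · simpa [g] using hDg 0 (σ i) (by simpa using hσi)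
    · rw [hu _ hσi]
      refine hD _ fun h => ?_
      obtain ⟨n, hn⟩ := Set.mem_iUnion.mp h
      cases n with
      | zero => exact hσi (by simpa using hn)
      | succ n =>
        rw [pow_succ', mul_smul, ← Equiv.Perm.smul_def, Set.smul_mem_smul_set_iff] at hn
        exact hi ⟨n, hn⟩

theorem IsCountablySyndetic.exists_fixator_subset_pow_eight [Countable ι] [Infinite ι]
    (hW : IsCountablySyndetic W) (hsym : W⁻¹ = W) (b : HilbertBasis ι 𝕜 H) :
    ∃ J : Set ι, J.Infinite ∧ Jᶜ.Infinite ∧ ∀ u ∈ fixator 𝕜 b J, u ∈ W ^ 8 := by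
  obtain ⟨S, hS, hSinf⟩ := exists_pairwise_disjoint_infinite ι
  obtain ⟨n, hn⟩ := hW.exists_full_block hsym b hS
  obtain ⟨σ, hσ, hR⟩ := exists_perm_family_isWandering (hSinf n)
  obtain ⟨x, y, hxy, hv⟩ := hW.exists_ne_inv_mul_mem_sq hsym fun x => permUnitary b (σ x)
  obtain ⟨R, hRS, hRinf, hR⟩ := hR x y hxy
  rw [← map_inv, ← map_mul] at hv
  have hσ' : ∀ z, σ z ∈ fixingSubgroup (Equiv.Perm ι) (S n)ᶜ := fun z =>
    (mem_fixingSubgroup_iff _).mpr (hσ z)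
  have hτ := mul_mem (inv_mem (hσ' x)) (hσ' y)
  refine ⟨Rᶜ, hR.infinite_compl hRinf, by rwa [compl_compl], fun u hu => ?_⟩
  obtain ⟨D, hD, rfl⟩ := exists_eq_commutator_of_isWandering b hR hu
  have hDS : D ∈ fixator 𝕜 b (S n)ᶜ := fun i hi => hD i <| Set.compl_subset_compl.mpr
    (Set.iUnion_subset fun k => smul_subset_of_mem_fixingSubgroup_compl hRS (pow_mem hτ k)) hi
  obtain ⟨h, hh, hhD⟩ := hn D hDS
  rw [commutator_eq_of_eq_on b (permUnitary_mem_fixator b hτ) hhD]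
  exact commutator_mem_pow hsym hh hv

end Blocks

section Orthonormal

theorem orthonormal_sumElim {v : ι → H} {w : κ → H} (hv : Orthonormal 𝕜 v)
    (hw : Orthonormal 𝕜 w) (hvw : ∀ i k, ⟪v i, w k⟫_𝕜 = 0) :
    Orthonormal 𝕜 (Sum.elim v w) := by
  refine ⟨Sum.forall.mpr ⟨hv.1, hw.1⟩, ?_⟩
  rintro (i | i) (j | j) hij
  · exact hv.2 fun h => hij (congrArg _ h)
  · exact hvw i j
  · exact inner_eq_zero_symm.mp (hvw j i)
  · exact hw.2 fun h => hij (congrArg _ h)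

open Classical in
theorem orthonormal_ite {e v : ι → H} (he : Orthonormal 𝕜 e) (hv : Orthonormal 𝕜 v) {S : Set ι}
    (h : ∀ i ∈ S, ∀ j, ⟪e i, v j⟫_𝕜 = 0) :
    Orthonormal 𝕜 fun i => if i ∈ S then e i else v i := by
  refine ⟨fun i => ?_, fun i j hij => ?_⟩ <;> dsimp only
  · split_ifs
    exacts [he.1 i, hv.1 i]
  · split_ifs with hi hj hj
    exacts [he.2 hij, h i hi j, inner_eq_zero_symm.mp (h j hj i), hv.2 hij]

theorem not_finiteDimensional_orthogonal_span {e : ι → H} (he : Orthonormal 𝕜 e) {S : Set ι}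
    (hS : Sᶜ.Infinite) : ¬ FiniteDimensional 𝕜 (span 𝕜 (e '' S))ᗮ := by
  intro hfin
  have hmem (i : (Sᶜ : Set ι)) : e i ∈ (span 𝕜 (e '' S))ᗮ := by
    rw [mem_orthogonal_span, Set.forall_mem_image]
    exact fun j hj => he.2 (ne_of_mem_of_not_mem hj i.2)
  have hli : LinearIndependent 𝕜 fun i : (Sᶜ : Set ι) => (⟨e i, hmem i⟩ : (span 𝕜 (e '' S))ᗮ) :=
    .of_comp (Submodule.subtype _) (he.comp _ Subtype.val_injective).linearIndependent
  exact hS (Set.finite_coe_iff.mp hli.finite)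

theorem exists_unit_mem_forall_inner_eq_zero {T : Submodule 𝕜 H} (hT : ¬ FiniteDimensional 𝕜 T)
    (s : Finset H) : ∃ y ∈ T, ‖y‖ = 1 ∧ ∀ x ∈ s, ⟪x, y⟫_𝕜 = 0 := by
  let f : T →ₗ[𝕜] (s → 𝕜) := LinearMap.pi fun x => (innerₛₗ 𝕜 (x : H)).comp T.subtype
  have hf : ¬ Function.Injective f := fun h => hT (Module.Finite.of_injective f h)
  rw [← LinearMap.ker_eq_bot, LinearMap.ker_eq_bot'] at hf
  push Not at hf
  obtain ⟨y, hfy, hy⟩ := hf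
  refine ⟨((‖(y : H)‖⁻¹ : ℝ) : 𝕜) • (y : H), T.smul_mem _ y.2, ?_, fun x hx => ?_⟩
  · simp [norm_smul, hy]
  · have hxy : ⟪x, (y : H)⟫_𝕜 = 0 := congrFun hfy ⟨x, hx⟩
    rw [inner_smul_right, hxy, mul_zero]

theorem exists_orthonormal_seq {T : Submodule 𝕜 H} (hT : ¬ FiniteDimensional 𝕜 T)
    (u : H ≃ₗᵢ[𝕜] H) : ∃ y : ℕ → H, Orthonormal 𝕜 y ∧ (∀ n, y n ∈ T) ∧
      Pairwise fun n m => ⟪u (y n), y m⟫_𝕜 = 0 := by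
  classical
  obtain ⟨y, hy, hr⟩ := exists_seq_of_forall_finset_exists (fun x => x ∈ T ∧ ‖x‖ = 1)
    (fun x y => ⟪x, y⟫_𝕜 = 0 ∧ ⟪u x, y⟫_𝕜 = 0 ∧ ⟪u y, x⟫_𝕜 = 0) fun s _ => by
      obtain ⟨y, hyT, hy, h⟩ :=
        exists_unit_mem_forall_inner_eq_zero hT (s ∪ s.image u ∪ s.image u.symm)
      refine ⟨y, ⟨hyT, hy⟩, fun x hx => ⟨h x ?_, h (u x) ?_, ?_⟩⟩
      · simp [hx]
      · simp [hx]
      · rw [u.inner_map_eq_flip, inner_eq_zero_symm]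
        exact h _ (by simp [hx])
  refine ⟨y, ⟨fun n => (hy n).2, fun n m hnm => ?_⟩, fun n => (hy n).1, fun n m hnm => ?_⟩ <;>
    rcases hnm.lt_or_gt with h | h
  exacts [(hr n m h).1, inner_eq_zero_symm.mp (hr m n h).1, (hr n m h).2.1, (hr m n h).2.2]

theorem exists_orthonormal_pair [Countable ι] {T : Submodule 𝕜 H}
    (hT : ¬ FiniteDimensional 𝕜 T) (u : H ≃ₗᵢ[𝕜] H) :
    ∃ z t : ι → H, Orthonormal 𝕜 z ∧ Orthonormal 𝕜 t ∧ (∀ i, z i ∈ T) ∧ (∀ i, t i ∈ T) ∧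
      ∀ i j, ⟪u (z i), t j⟫_𝕜 = 0 := by
  obtain ⟨y, hy, hyT, huy⟩ := exists_orthonormal_seq hT u
  obtain ⟨f, hf⟩ := exists_injective_nat ι
  refine ⟨fun i => y (2 * f i), fun i => y (2 * f i + 1),
    hy.comp _ fun i j h => hf (by simpa using h), hy.comp _ fun i j h => hf (by simpa using h),
    fun i => hyT _, fun i => hyT _, fun i j => huy (by lia)⟩

theorem countable_of_orthonormal [TopologicalSpace.SeparableSpace H] {v : ι → H}
    (hv : Orthonormal 𝕜 v) : Countable ι := by
  have hdisj : Pairwise (Function.onFun Disjoint fun i => Metric.ball (v i) (1 / 2)) := by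
    intro i j hij
    apply Metric.ball_disjoint_ball
    have hsq : ‖v i - v j‖ ^ 2 = 2 := by
      rw [@norm_sub_sq 𝕜, hv.1, hv.1, hv.2 hij]
      norm_num
    rw [dist_eq_norm]
    nlinarith [norm_nonneg (v i - v j)]
  exact hdisj.countable_of_isOpen_disjoint (fun _ => Metric.isOpen_ball)
    fun i => ⟨v i, Metric.mem_ball_self (by norm_num)⟩

end Orthonormal

section Separable

variable [CompleteSpace H] [TopologicalSpace.SeparableSpace H]

theorem exists_hilbertBasis_nat (hinf : ¬ FiniteDimensional 𝕜 H) :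
    Nonempty (HilbertBasis ℕ 𝕜 H) := by
  obtain ⟨w, b, -⟩ := exists_hilbertBasis 𝕜 H
  have hcountable : Countable w := countable_of_orthonormal b.orthonormal
  have hinfinite : Infinite w := not_finite_iff_infinite.mp fun _ => by
    have := Fintype.ofFinite w
    exact hinf b.toOrthonormalBasis.toBasis.finiteDimensional_of_finite
  obtain ⟨e⟩ := nonempty_equiv_of_countable (α := ℕ) (β := w)
  exact ⟨reindexBasis b e⟩

theorem exists_hilbertBasis_sum_extend {v : κ → H} (hv : Orthonormal 𝕜 v)
    (hinf : ¬ FiniteDimensional 𝕜 (span 𝕜 (Set.range v))ᗮ) :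
    ∃ b : HilbertBasis (κ ⊕ ℕ) 𝕜 H, ∀ k, b (Sum.inl k) = v k := by
  obtain ⟨c⟩ := exists_hilbertBasis_nat hinf
  have hortho : Orthonormal 𝕜 (Sum.elim v fun n => (c n : H)) :=
    orthonormal_sumElim hv (c.orthonormal.comp_linearIsometry (subtypeₗᵢ _))
      fun k n => mem_orthogonal_span_range.mp (c n).2 k
  have htotal : (span 𝕜 (Set.range (Sum.elim v fun n => (c n : H))))ᗮ = ⊥ := by
    refine eq_bot_iff.mpr fun x hx => ?_
    obtain ⟨hxv, hxc⟩ := Sum.forall.mp (mem_orthogonal_span_range.mp hx)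
    have hx0 : (⟨x, mem_orthogonal_span_range.mpr hxv⟩ : (span 𝕜 (Set.range v))ᗮ) ∈
        (span 𝕜 (Set.range c))ᗮ := mem_orthogonal_span_range.mpr hxc
    rw [orthogonal_span_hilbertBasis] at hx0
    exact congrArg Subtype.val hx0
  exact ⟨.mkOfOrthogonalEqBot hortho htotal, fun k => by simp⟩

theorem exists_unitary_extend {e v : ι → H} (he : Orthonormal 𝕜 e) (hv : Orthonormal 𝕜 v)
    {S : Set ι} (hS : Sᶜ.Infinite) : ∃ g : H ≃ₗᵢ[𝕜] H, ∀ i ∈ S, g (e i) = v i := by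
  have hbasis : ∀ {w : ι → H}, Orthonormal 𝕜 w →
      ∃ b : HilbertBasis (S ⊕ ℕ) 𝕜 H, ∀ i : S, b (Sum.inl i) = w i := fun {w} hw =>
    exists_hilbertBasis_sum_extend (hw.comp _ Subtype.val_injective) <| by
      have := not_finiteDimensional_orthogonal_span hw hS
      rwa [Set.image_eq_range] at this
  obtain ⟨b, hb⟩ := hbasis he
  obtain ⟨c, hc⟩ := hbasis hv
  refine ⟨basisChange b c, fun i hi => ?_⟩
  rw [← hb ⟨i, hi⟩, basisChange_apply, hc]

theorem exists_mem_fixator_of_orthonormal {e v : ι → H} (he : Orthonormal 𝕜 e)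
    (hv : Orthonormal 𝕜 v) {S R : Set ι} (hSR : (S ∪ R)ᶜ.Infinite)
    (h : ∀ i ∈ S, ∀ j, ⟪e i, v j⟫_𝕜 = 0) :
    ∃ g ∈ fixator 𝕜 e S, ∀ i ∈ R \ S, g (e i) = v i := by
  obtain ⟨g, hg⟩ := exists_unitary_extend he (orthonormal_ite he hv h) hSR
  refine ⟨g, fun i hi => ?_, fun i hi => ?_⟩
  · rw [hg i (Or.inl hi), if_pos hi]
  · rw [hg i (Or.inr hi.1), if_neg hi.2]

/-- Conjugation moves the basis vectors indexed by `J₁ \ J₂` and their images under `u` into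
position: `a` frees the room that `d` needs to undo the action of `u` on these vectors. -/
theorem exists_factorization_of_mem_fixator_inter {e : ι → H} (he : Orthonormal 𝕜 e)
    {J₁ J₂ : Set ι} (hJ : (J₁ ∪ J₂)ᶜ.Infinite) {u : H ≃ₗᵢ[𝕜] H}
    (hu : u ∈ fixator 𝕜 e (J₁ ∩ J₂)) :
    ∃ a ∈ fixator 𝕜 e J₁, ∃ d ∈ fixator 𝕜 e J₂, ∃ c ∈ fixator 𝕜 e J₁, ∃ r ∈ fixator 𝕜 e J₂,
      u = a * d * c * r := by
  have := countable_of_orthonormal he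
  have hJ' : (J₂ ∪ J₁)ᶜ.Infinite := by rwa [Set.union_comm]
  obtain ⟨z, t, hz, ht, hzT, htT, hzt⟩ :=
    exists_orthonormal_pair (ι := ι) (not_finiteDimensional_orthogonal_span he hJ) u
  simp only [mem_orthogonal_span, Set.forall_mem_image] at hzT htT
  obtain ⟨a, ha, hat⟩ := exists_mem_fixator_of_orthonormal he ht hJ
    fun i hi j => htT j (Or.inl hi)
  have horth : ∀ i ∈ J₂, ∀ j, ⟪e i, a⁻¹ (u (z j))⟫_𝕜 = 0 := fun i hi j => by
    have hflip : ⟪e i, a⁻¹ (u (z j))⟫_𝕜 = ⟪a (e i), u (z j)⟫_𝕜 := (a.inner_map_eq_flip _ _).symm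
    rw [hflip]
    by_cases hi₁ : i ∈ J₁
    · rw [ha i hi₁, ← hu i ⟨hi₁, hi⟩, u.inner_map_map]
      exact hzT j (Or.inl hi₁)
    · rw [hat i ⟨hi, hi₁⟩]
      exact inner_eq_zero_symm.mp (hzt j i)
  obtain ⟨d, hd, hdz⟩ := exists_mem_fixator_of_orthonormal he
    (hz.comp_linearIsometryEquiv (u.trans a⁻¹)) hJ' horth
  obtain ⟨r, hr, hrz⟩ := exists_mem_fixator_of_orthonormal he hz hJ'
    fun i hi j => hzT j (Or.inr hi)
  refine ⟨a, ha, d, hd, d⁻¹ * a⁻¹ * u * r, fun i hi => ?_, r⁻¹, inv_mem hr, by group⟩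
  change d⁻¹ (a⁻¹ (u (r (e i)))) = e i
  by_cases hi₂ : i ∈ J₂
  · rw [hr i hi₂, hu i ⟨hi, hi₂⟩, (inv_mem ha :) i hi, (inv_mem hd :) i hi₂]
  · rw [hrz i ⟨hi, hi₂⟩]
    exact (LinearIsometryEquiv.symm_apply_eq d).mpr (hdz i ⟨hi, hi₂⟩).symm

theorem IsCountablySyndetic.exists_finite_fixator_subset_pow_forty [Infinite ι]
    {W : Set (H ≃ₗᵢ[𝕜] H)} (hW : IsCountablySyndetic W) (hsym : W⁻¹ = W)
    (b : HilbertBasis ι 𝕜 H) :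
    ∃ Φ : Set ι, Φ.Finite ∧ ∀ u ∈ fixator 𝕜 b Φ, u ∈ W ^ 40 := by
  have := countable_of_orthonormal b.orthonormal
  obtain ⟨J, hJ, hJ', hJW⟩ := hW.exists_fixator_subset_pow_eight hsym b
  obtain ⟨σ, hσ⟩ := exists_perm_family_inter_finite hJ hJ'
  obtain ⟨x, y, hxy, hk⟩ := hW.exists_ne_inv_mul_mem_sq hsym fun x => permUnitary b (σ x)
  obtain ⟨hfin, hinf⟩ := hσ x y hxy
  rw [← map_inv, ← map_mul] at hk
  set τ := (σ x)⁻¹ * σ y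
  have hτW : ∀ u ∈ fixator 𝕜 b (τ • J), u ∈ W ^ 12 := fun u hu => by
    refine mem_pow_of_conj_mem_pow hsym hk (hJW _ (conj_mem_fixator_iff.mpr fun i hi => ?_))
    simpa using hu _ (Set.smul_mem_smul_set hi)
  refine ⟨J ∩ τ • J, hfin, fun u hu => ?_⟩
  obtain ⟨a, ha, d, hd, c, hc, r, hr, rfl⟩ :=
    exists_factorization_of_mem_fixator_inter b.orthonormal hinf hu
  exact mul_mem_pow_add (mul_mem_pow_add (mul_mem_pow_add (hJW a ha) (hτW d hd)) (hJW c hc))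
    (hτW r hr)

end Separable

section Extension

theorem exists_unitary_extend_of_finiteDimensional (K : Submodule 𝕜 H) [FiniteDimensional 𝕜 K]
    (L : K →ₗᵢ[𝕜] K) : ∃ g : H ≃ₗᵢ[𝕜] H, ∀ x : K, g x = L x := by
  have hsymm : ∀ y : K, K.orthogonalDecomposition.symm (.toLp 2 (y, 0)) = y := fun y =>
    add_zero (y : H)
  refine ⟨K.orthogonalDecomposition.trans
    ((LinearIsometryEquiv.withLpProdCongr 2 (L.toLinearIsometryEquiv rfl) (.refl 𝕜 _)).trans
      K.orthogonalDecomposition.symm), fun x => ?_⟩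
  rw [← hsymm x, LinearIsometryEquiv.trans_apply, LinearIsometryEquiv.trans_apply,
    LinearIsometryEquiv.apply_symm_apply]
  exact hsymm (L x)

theorem exists_unitary_extend_linearIsometry {S : Submodule 𝕜 H} [FiniteDimensional 𝕜 S]
    (L : S →ₗᵢ[𝕜] H) : ∃ g : H ≃ₗᵢ[𝕜] H, ∀ x : S, g x = L x := by
  set K := S ⊔ L.toLinearMap.range
  have hS : S ≤ K := le_sup_left
  let M : S.submoduleOf K →ₗᵢ[𝕜] K :=
    { toLinearMap := (L.toLinearMap ∘ₗ (Submodule.submoduleOfEquivOfLe hS).toLinearMap).codRestrict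
        K fun x => le_sup_right (a := S) ⟨_, rfl⟩
      norm_map' := fun x => L.norm_map _ }
  obtain ⟨g, hg⟩ := exists_unitary_extend_of_finiteDimensional K M.extend
  refine ⟨g, fun x => ?_⟩
  calc g x = M.extend ⟨x, hS x.2⟩ := hg ⟨x, hS x.2⟩
    _ = M ⟨⟨x, hS x.2⟩, x.2⟩ := congrArg Subtype.val (M.extend_apply ⟨⟨x, hS x.2⟩, x.2⟩)
    _ = L x := rfl

theorem exists_linearIsometry_of_norm_eq {V : Type*} [AddCommGroup V] [Module 𝕜 V]
    {A B : V →ₗ[𝕜] H} (h : ∀ c, ‖B c‖ = ‖A c‖) :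
    ∃ L : A.range →ₗᵢ[𝕜] H, ∀ c, L ⟨A c, c, rfl⟩ = B c := by
  obtain ⟨σ, hσ⟩ := A.rangeRestrict.exists_rightInverse_of_surjective A.range_rangeRestrict
  have hσ' : ∀ x : A.range, A (σ x) = x := fun x => congrArg Subtype.val (LinearMap.congr_fun hσ x)
  refine ⟨⟨B ∘ₗ σ, fun x => ?_⟩, fun c => ?_⟩
  · rw [LinearMap.comp_apply, h, hσ', coe_norm]
  · change B (σ _) = B c
    rw [← sub_eq_zero, ← norm_eq_zero, ← map_sub, h, map_sub, hσ', sub_self, norm_zero]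

theorem exists_unitary_of_gram_eq [Finite κ] {v w : κ → H}
    (h : Matrix.gram 𝕜 v = Matrix.gram 𝕜 w) : ∃ g : H ≃ₗᵢ[𝕜] H, ∀ k, g (v k) = w k := by
  classical
  have := Fintype.ofFinite κ
  have hnorm : ∀ c, ‖Fintype.linearCombination 𝕜 w c‖ = ‖Fintype.linearCombination 𝕜 v c‖ := by
    have h' : ∀ i j, ⟪v i, v j⟫_𝕜 = ⟪w i, w j⟫_𝕜 := fun i j => congrFun₂ h i j
    intro c
    simp only [Fintype.linearCombination_apply, @norm_eq_sqrt_re_inner 𝕜, sum_inner, inner_sum,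
      inner_smul_left, inner_smul_right, h']
  obtain ⟨L, hL⟩ := exists_linearIsometry_of_norm_eq hnorm
  obtain ⟨g, hg⟩ := exists_unitary_extend_linearIsometry L
  exact ⟨g, fun k => by simpa using (hg _).trans (hL (Pi.single k 1))⟩

end Extension

section CrossGram

open Matrix

variable (𝕜) in
/-- The rectangular Gram matrix of two families. When `e` is orthonormal, the columns of
`crossGram 𝕜 e v` are the coefficients along `e` of the vectors of `v`. -/
def crossGram (e : κ → H) (v : ι → H) : Matrix κ ι 𝕜 :=
  .of fun k i => ⟪e k, v i⟫_𝕜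

theorem crossGram_self (e : κ → H) : crossGram 𝕜 e e = gram 𝕜 e :=
  rfl

theorem conjTranspose_crossGram (e : κ → H) (v : ι → H) :
    (crossGram 𝕜 e v)ᴴ = crossGram 𝕜 v e := by
  ext
  simp [crossGram]

theorem crossGram_sumElim {α β : Type*} (e : α → H) (f : β → H) (v : ι → H) :
    crossGram 𝕜 (Sum.elim e f) v = fromRows (crossGram 𝕜 e v) (crossGram 𝕜 f v) := by
  ext (i | i) j <;> rfl

theorem crossGram_add_smul (e f : κ → H) (v : ι → H) (c s : ℝ) :
    crossGram 𝕜 (fun k => (c : 𝕜) • e k + (s : 𝕜) • f k) v =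
      (c : 𝕜) • crossGram 𝕜 e v + (s : 𝕜) • crossGram 𝕜 f v := by
  ext
  simp [crossGram, inner_add_left, inner_smul_left, RCLike.real_smul_eq_coe_mul]

theorem crossGram_sum_smul {α : Type*} [Fintype α] (e : κ → H) (w : α → H) (N : Matrix α ι 𝕜) :
    crossGram 𝕜 e (fun i => ∑ a, N a i • w a) = crossGram 𝕜 e w * N := by
  ext
  simp [crossGram, mul_apply, inner_sum, inner_smul_right, mul_comm]

theorem orthonormal_sum_smul {α : Type*} [Fintype α] [DecidableEq ι] {w : α → H}
    (hw : Orthonormal 𝕜 w) {N : Matrix α ι 𝕜} (hN : Nᴴ * N = 1) :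
    Orthonormal 𝕜 fun i => ∑ a, N a i • w a := by
  classical
  rw [← gram_eq_one_iff_orthonormal, ← crossGram_self, crossGram_sum_smul,
    ← conjTranspose_crossGram, crossGram_sum_smul, crossGram_self,
    gram_eq_one_iff_orthonormal.mpr hw, Matrix.one_mul, hN]

theorem exists_mem_fixator_of_crossGram_eq [Finite ι] [Finite κ] {p : ι → H} {v w : κ → H}
    (hv : Orthonormal 𝕜 v) (hw : Orthonormal 𝕜 w) (h : crossGram 𝕜 p v = crossGram 𝕜 p w) :
    ∃ g ∈ fixator 𝕜 p Set.univ, ∀ k, g (v k) = w k := by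
  classical
  have hgram : gram 𝕜 (Sum.elim p v) = gram 𝕜 (Sum.elim p w) := by
    have h' := congrArg conjTranspose h
    rw [conjTranspose_crossGram, conjTranspose_crossGram] at h'
    have hvw : gram 𝕜 v = gram 𝕜 w := by
      rw [gram_eq_one_iff_orthonormal.mpr hv, gram_eq_one_iff_orthonormal.mpr hw]
    ext (i | i) (j | j)
    exacts [rfl, congrFun₂ h i j, congrFun₂ h' i j, congrFun₂ hvw i j]
  obtain ⟨g, hg⟩ := exists_unitary_of_gram_eq hgram
  exact ⟨g, fun i _ => hg (Sum.inl i), fun k => hg (Sum.inr k)⟩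

end CrossGram

section Contractions

open Matrix
open scoped ComplexOrder

/-- A matrix whose operator norm for the Euclidean norms is at most `1`, expressed by positivity
so as to avoid choosing a norm on matrices. -/
def IsContraction [Fintype κ] [DecidableEq ι] (N : Matrix κ ι 𝕜) : Prop :=
  (1 - Nᴴ * N).PosSemidef

theorem exists_orthonormal_mem_orthogonal [Finite κ] (hinf : ¬ FiniteDimensional 𝕜 H)
    (S : Submodule 𝕜 H) [FiniteDimensional 𝕜 S] :
    ∃ g : κ → H, Orthonormal 𝕜 g ∧ ∀ k, g k ∈ Sᗮ := by
  have hS : ¬ FiniteDimensional 𝕜 Sᗮ := fun _ =>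
    hinf (S.prodEquivOfIsCompl Sᗮ S.isCompl_orthogonal).finiteDimensional
  obtain ⟨y, hy, hyS, -⟩ := exists_orthonormal_seq hS 1
  obtain ⟨enc, henc⟩ := exists_injective_nat κ
  exact ⟨y ∘ enc, hy.comp enc henc, fun k => hyS (enc k)⟩

theorem exists_orthonormal_crossGram_eq [Finite ι] [DecidableEq ι] [Fintype κ]
    (hinf : ¬ FiniteDimensional 𝕜 H) {e : κ → H} (he : Orthonormal 𝕜 e) {M : Matrix κ ι 𝕜}
    (hM : IsContraction M) : ∃ v : ι → H, Orthonormal 𝕜 v ∧ crossGram 𝕜 e v = M := by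
  classical
  have := Fintype.ofFinite ι
  obtain ⟨B, hB⟩ : ∃ B : Matrix ι ι 𝕜, 1 - Mᴴ * M = Bᴴ * B := by
    open scoped MatrixOrder in
    exact CStarAlgebra.nonneg_iff_eq_star_mul_self.mp (PosSemidef.nonneg hM)
  have := FiniteDimensional.span_of_finite 𝕜 (Set.finite_range e)
  obtain ⟨g, hg, hgS⟩ := exists_orthonormal_mem_orthogonal (κ := ι) hinf (span 𝕜 (Set.range e))
  have heg : Orthonormal 𝕜 (Sum.elim e g) :=
    orthonormal_sumElim he hg fun k i => mem_orthogonal_span_range.mp (hgS i) k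
  refine ⟨_, orthonormal_sum_smul heg (N := fromRows M B) ?_, ?_⟩
  · rw [conjTranspose_fromRows_eq_fromCols_conjTranspose, fromCols_mul_fromRows, ← hB,
      add_sub_cancel]
  · have h := crossGram_sum_smul (Sum.elim e g) (Sum.elim e g) (fromRows M B)
    rw [crossGram_self, gram_eq_one_iff_orthonormal.mpr heg, Matrix.one_mul,
      crossGram_sumElim] at h
    exact (fromRows_inj h).1

theorem posSemidef_gram_sub [Finite ι] [Fintype κ] {e : κ → H} (he : Orthonormal 𝕜 e) (v : ι → H) :
    (gram 𝕜 v - (crossGram 𝕜 e v)ᴴ * crossGram 𝕜 e v).PosSemidef := by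
  classical
  suffices hgram : gram 𝕜 v - (crossGram 𝕜 e v)ᴴ * crossGram 𝕜 e v =
      gram 𝕜 fun i => v i - ∑ j, ⟪e j, v i⟫_𝕜 • e j by
    rw [hgram]
    exact posSemidef_gram 𝕜 _
  ext i l
  have hres : ∀ j, ⟪e j, v l - ∑ j, ⟪e j, v l⟫_𝕜 • e j⟫_𝕜 = 0 := fun j => by
    rw [inner_sub_right, he.inner_right_fintype, sub_self]
  simp only [gram_apply, inner_sub_left _ _ (_ - _), sum_inner, inner_smul_left, hres, mul_zero,
    Finset.sum_const_zero, sub_zero]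
  simp [inner_sub_right, inner_sum, inner_smul_right, mul_apply, crossGram, mul_comm]

theorem isContraction_crossGram [Finite ι] [Fintype κ] [DecidableEq ι] {e : κ → H} {v : ι → H}
    (he : Orthonormal 𝕜 e) (hv : Orthonormal 𝕜 v) : IsContraction (crossGram 𝕜 e v) := by
  have h := posSemidef_gram_sub he v
  rwa [gram_eq_one_iff_orthonormal.mpr hv] at h

theorem IsContraction.fromRows_zero {α : Type*} [Fintype κ] [Fintype α] [DecidableEq ι]
    {N : Matrix κ ι 𝕜} (hN : IsContraction N) : IsContraction (fromRows N (0 : Matrix α ι 𝕜)) := by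
  rwa [IsContraction, conjTranspose_fromRows_eq_fromCols_conjTranspose, fromCols_mul_fromRows,
    Matrix.mul_zero, add_zero]

theorem star_dotProduct_self_eq_sum_norm_sq [Fintype ι] (x : ι → 𝕜) :
    star x ⬝ᵥ x = ((∑ i, ‖x i‖ ^ 2 : ℝ) : 𝕜) := by
  simp [dotProduct, RCLike.conj_mul]

theorem posSemidef_smul_one_sub [Fintype ι] [Fintype κ] [DecidableEq ι] {N : Matrix κ ι 𝕜} {ε : ℝ}
    (hN : ∑ k, ∑ i, ‖N k i‖ ^ 2 ≤ ε) : ((ε : 𝕜) • (1 : Matrix ι ι 𝕜) - Nᴴ * N).PosSemidef := by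
  refine .of_dotProduct_mulVec_nonneg ?_ fun x => ?_
  · refine .sub ?_ (isHermitian_conjTranspose_mul_self N)
    simp [IsHermitian, conjTranspose_smul]
  have hquad : star x ⬝ᵥ (((ε : 𝕜) • (1 : Matrix ι ι 𝕜) - Nᴴ * N) *ᵥ x) =
      ((ε * ∑ i, ‖x i‖ ^ 2 - ∑ k, ‖(N *ᵥ x) k‖ ^ 2 : ℝ) : 𝕜) := by
    rw [sub_mulVec, dotProduct_sub, smul_mulVec, one_mulVec, dotProduct_smul,
      star_dotProduct_self_eq_sum_norm_sq,
      ← mulVec_mulVec, dotProduct_mulVec, vecMul_conjTranspose, star_star,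
      star_dotProduct_self_eq_sum_norm_sq]
    simp
  rw [hquad, RCLike.ofReal_nonneg, sub_nonneg]
  calc ∑ k, ‖(N *ᵥ x) k‖ ^ 2 ≤ ∑ k, (∑ i, ‖N k i‖ ^ 2) * ∑ i, ‖x i‖ ^ 2 := by
        refine Finset.sum_le_sum fun k _ => ?_
        calc ‖(N *ᵥ x) k‖ ^ 2 ≤ (∑ i, ‖N k i‖ * ‖x i‖) ^ 2 := by
              gcongr
              exact (norm_sum_le _ _).trans_eq (by simp only [norm_mul])
          _ ≤ _ := Finset.sum_mul_sq_le_sq_mul_sq _ _ _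
    _ ≤ ε * ∑ i, ‖x i‖ ^ 2 := by
        rw [← Finset.sum_mul]
        gcongr

theorem isContraction_fromRows_smul_one [Fintype ι] [Fintype κ] [DecidableEq ι] {a : ℝ}
    {N : Matrix κ ι 𝕜} (hN : a ^ 2 + ∑ k, ∑ i, ‖N k i‖ ^ 2 ≤ 1) :
    IsContraction (fromRows ((a : 𝕜) • (1 : Matrix ι ι 𝕜)) N) := by
  have h := posSemidef_smul_one_sub (le_sub_iff_add_le'.mpr hN)
  rw [IsContraction, conjTranspose_fromRows_eq_fromCols_conjTranspose, fromCols_mul_fromRows]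
  convert h using 1
  simp only [conjTranspose_smul, conjTranspose_one, RCLike.star_def, RCLike.conj_ofReal,
    Matrix.smul_mul, Matrix.one_mul, smul_smul, RCLike.ofReal_sub, RCLike.ofReal_one,
    RCLike.ofReal_mul, pow_two, sub_smul, one_smul, sub_sub]

end Contractions

section Rotation

open Matrix

theorem crossGram_add_smul_add_smul [DecidableEq κ] {e f : κ → H} (he : Orthonormal 𝕜 e)
    (hf : Orthonormal 𝕜 f) (hef : crossGram 𝕜 e f = 0) (c s c' s' : ℝ) :
    crossGram 𝕜 (fun k => (c : 𝕜) • e k + (s : 𝕜) • f k)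
      (fun k => (c' : 𝕜) • e k + (s' : 𝕜) • f k) = ((c * c' + s * s' : ℝ) : 𝕜) • 1 := by
  have hfe : crossGram 𝕜 f e = 0 := by rw [← conjTranspose_crossGram, hef, conjTranspose_zero]
  rw [crossGram_add_smul, ← conjTranspose_crossGram _ e, ← conjTranspose_crossGram _ f,
    crossGram_add_smul, crossGram_add_smul, hef, hfe, crossGram_self, crossGram_self,
    gram_eq_one_iff_orthonormal.mpr he, gram_eq_one_iff_orthonormal.mpr hf]
  simp only [smul_zero, add_zero, zero_add, conjTranspose_smul, conjTranspose_one, RCLike.star_def,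
    RCLike.conj_ofReal, smul_smul, ← add_smul, RCLike.ofReal_add, RCLike.ofReal_mul]

theorem exists_orthonormal_eq_add_smul [DecidableEq κ] {e v : κ → H} (he : Orthonormal 𝕜 e)
    (hv : Orthonormal 𝕜 v) {c s : ℝ} (hs : s ≠ 0) (hcs : c ^ 2 + s ^ 2 = 1)
    (hev : crossGram 𝕜 e v = (c : 𝕜) • 1) :
    ∃ f : κ → H, Orthonormal 𝕜 f ∧ crossGram 𝕜 e f = 0 ∧
      ∀ k, v k = (c : 𝕜) • e k + (s : 𝕜) • f k := by
  let f : κ → H := fun k => ((-(c / s) : ℝ) : 𝕜) • e k + ((s⁻¹ : ℝ) : 𝕜) • v k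
  have hef : crossGram 𝕜 e f = 0 := by
    rw [← conjTranspose_crossGram, crossGram_add_smul, ← conjTranspose_crossGram e v, hev,
      crossGram_self, gram_eq_one_iff_orthonormal.mpr he]
    simp only [conjTranspose_smul, conjTranspose_one, RCLike.star_def,
      RCLike.conj_ofReal, smul_smul, ← add_smul, ← RCLike.ofReal_mul, ← RCLike.ofReal_add]
    have hcoef : -(c / s) + s⁻¹ * c = 0 := by ring
    rw [hcoef, RCLike.ofReal_zero, zero_smul]
  refine ⟨f, ?_, hef, fun k => ?_⟩
  · rw [← gram_eq_one_iff_orthonormal, ← crossGram_self, crossGram_add_smul, hef,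
      ← conjTranspose_crossGram f v, crossGram_add_smul, hev, crossGram_self,
      gram_eq_one_iff_orthonormal.mpr hv]
    simp only [conjTranspose_smul, conjTranspose_one, RCLike.star_def,
      RCLike.conj_ofReal, smul_smul, ← add_smul, ← RCLike.ofReal_mul, ← RCLike.ofReal_add]
    have hcoef : s⁻¹ * (-(c / s) * c + s⁻¹) = 1 := by
      field_simp
      linear_combination -hcs
    rw [hcoef, smul_zero, zero_add, RCLike.ofReal_one, one_smul]
  · have hcoef : s * -(c / s) = -c := by field_simp
    simp only [f, smul_add, smul_smul, ← RCLike.ofReal_mul, hcoef, mul_inv_cancel₀ hs]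
    rw [RCLike.ofReal_neg, neg_smul, RCLike.ofReal_one, one_smul, add_neg_cancel_left]

theorem IsCountablySyndetic.exists_rotation_mem_sq [Finite κ] {W : Set (H ≃ₗᵢ[𝕜] H)}
    (hW : IsCountablySyndetic W) (hsym : W⁻¹ = W) (hinf : ¬ FiniteDimensional 𝕜 H)
    {e : κ → H} (he : Orthonormal 𝕜 e) :
    ∃ k ∈ W ^ 2, ∃ c s : ℝ, s ≠ 0 ∧ ∃ f : κ → H, Orthonormal 𝕜 f ∧ crossGram 𝕜 e f = 0 ∧
      ∀ i, k (e i) = (c : 𝕜) • e i + (s : 𝕜) • f i := by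
  classical
  have := FiniteDimensional.span_of_finite 𝕜 (Set.finite_range e)
  obtain ⟨p, hp, hpS⟩ := exists_orthonormal_mem_orthogonal (κ := κ) hinf (span 𝕜 (Set.range e))
  have hep : crossGram 𝕜 e p = 0 := by
    ext i j
    exact mem_orthogonal_span_range.mp (hpS j) i
  let rotated (t : ℝ) (i : κ) : H := (Real.cos t : 𝕜) • e i + (Real.sin t : 𝕜) • p i
  have hrotated (x y : ℝ) :
      crossGram 𝕜 (rotated x) (rotated y) = (Real.cos (x - y) : 𝕜) • 1 := by
    rw [crossGram_add_smul_add_smul he hp hep, Real.cos_sub]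
  have hg (t : ℝ) : ∃ g : H ≃ₗᵢ[𝕜] H, ∀ i, g (e i) = rotated (Real.arctan t) i := by
    refine exists_unitary_of_gram_eq ?_
    rw [gram_eq_one_iff_orthonormal.mpr he, ← crossGram_self, hrotated, sub_self, Real.cos_zero,
      RCLike.ofReal_one, one_smul]
  choose g hg using hg
  obtain ⟨x, y, hxy, hk⟩ := hW.exists_ne_inv_mul_mem_sq hsym g
  have hcross : crossGram 𝕜 e (fun i => ((g x)⁻¹ * g y) (e i)) =
      (Real.cos (Real.arctan x - Real.arctan y) : 𝕜) • 1 := by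
    rw [← hrotated]
    ext i j
    change ⟪e i, (g x).symm (g y (e j))⟫_𝕜 = ⟪rotated _ i, rotated _ j⟫_𝕜
    rw [← hg, ← hg, (g x).inner_map_eq_flip]
  have hsin : Real.sin (Real.arctan x - Real.arctan y) ≠ 0 := by
    rw [Ne, Real.sin_eq_zero_iff_of_lt_of_lt, sub_eq_zero]
    · exact fun h => hxy (Real.arctan_injective h)
    · linarith [Real.neg_pi_div_two_lt_arctan x, Real.arctan_lt_pi_div_two y]
    · linarith [Real.neg_pi_div_two_lt_arctan y, Real.arctan_lt_pi_div_two x]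
  exact ⟨_, hk, _, _, hsin, exists_orthonormal_eq_add_smul he
    (he.comp_linearIsometryEquiv ((g x)⁻¹ * g y)) hsin (Real.cos_sq_add_sin_sq _) hcross⟩

end Rotation

section Factorization

open Matrix

theorem exists_orthonormal_crossGram_eq_and [Finite ι] [DecidableEq ι] [Fintype κ]
    (hinf : ¬ FiniteDimensional 𝕜 H) {e f : κ → H} (he : Orthonormal 𝕜 e) (hf : Orthonormal 𝕜 f)
    (hef : crossGram 𝕜 e f = 0) {M T : Matrix κ ι 𝕜} (hMT : IsContraction (fromRows M T)) :
    ∃ v : ι → H, Orthonormal 𝕜 v ∧ crossGram 𝕜 e v = M ∧ crossGram 𝕜 f v = T := by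
  obtain ⟨v, hv, h⟩ := exists_orthonormal_crossGram_eq hinf
    (orthonormal_sumElim he hf fun i j => congrFun₂ hef i j) hMT
  rw [crossGram_sumElim] at h
  exact ⟨v, hv, fromRows_inj h⟩

/-- The families `e`, `v₁`, `v₂`, `v₃`, `h ∘ e` of the proof are connected in turn by `b₂`, `a₂`,
`b₁`, `a₁`. Both `v₁` and `v₂` have the coefficients `M₀` along `e`; along `p`, `v₁` has the
coefficients of `e`, and `v₂` those of `v₃`, which is orthogonal to `f` and agrees with `h ∘ e`
along `e`. -/
theorem exists_factorization_of_isContraction [Fintype κ] [DecidableEq κ]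
    (hinf : ¬ FiniteDimensional 𝕜 H) {e f : κ → H} (he : Orthonormal 𝕜 e) (hf : Orthonormal 𝕜 f)
    (hef : crossGram 𝕜 e f = 0) {s r : ℝ} {h : H ≃ₗᵢ[𝕜] H} {M₀ : Matrix κ κ 𝕜}
    (h₁ : IsContraction (fromRows M₀ ((r : 𝕜) • (1 - M₀))))
    (h₂ : IsContraction (fromRows M₀ ((r : 𝕜) • (crossGram 𝕜 e (fun i => h (e i)) - M₀)))) :
    let p := fun i => ((s * r : ℝ) : 𝕜) • e i + (s : 𝕜) • f i
    ∃ a₁ ∈ fixator 𝕜 e Set.univ, ∃ b₁ ∈ fixator 𝕜 p Set.univ, ∃ a₂ ∈ fixator 𝕜 e Set.univ,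
      ∃ b₂ ∈ fixator 𝕜 p Set.univ, ∃ a₃ ∈ fixator 𝕜 e Set.univ, h = a₁ * b₁ * a₂ * b₂ * a₃ := by
  intro p
  have hhe : Orthonormal 𝕜 fun i => h (e i) := he.comp_linearIsometryEquiv h
  obtain ⟨v₁, hv₁, hev₁, hfv₁⟩ := exists_orthonormal_crossGram_eq_and hinf he hf hef h₁
  obtain ⟨v₂, hv₂, hev₂, hfv₂⟩ := exists_orthonormal_crossGram_eq_and hinf he hf hef h₂
  obtain ⟨v₃, hv₃, hev₃, hfv₃⟩ := exists_orthonormal_crossGram_eq_and hinf he hf hef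
    (isContraction_crossGram he hhe).fromRows_zero
  have hfe : crossGram 𝕜 f e = 0 := by rw [← conjTranspose_crossGram, hef, conjTranspose_zero]
  have hp (X : Matrix κ κ 𝕜) :
      ((s * r : ℝ) : 𝕜) • M₀ + (s : 𝕜) • (r : 𝕜) • (X - M₀) = ((s * r : ℝ) : 𝕜) • X := by
    rw [smul_smul, ← RCLike.ofReal_mul, smul_sub, add_sub_cancel]
  obtain ⟨b₂, hb₂, hb₂v⟩ := exists_mem_fixator_of_crossGram_eq (p := p) he hv₁ <| by
    rw [crossGram_add_smul, crossGram_add_smul, hev₁, hfv₁, hfe, hp, crossGram_self,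
      gram_eq_one_iff_orthonormal.mpr he, smul_zero, add_zero]
  obtain ⟨a₂, ha₂, ha₂v⟩ := exists_mem_fixator_of_crossGram_eq hv₁ hv₂ (hev₁.trans hev₂.symm)
  obtain ⟨b₁, hb₁, hb₁v⟩ := exists_mem_fixator_of_crossGram_eq (p := p) hv₂ hv₃ <| by
    rw [crossGram_add_smul, crossGram_add_smul, hev₂, hfv₂, hev₃, hfv₃, hp, smul_zero, add_zero]
  obtain ⟨a₁, ha₁, ha₁v⟩ := exists_mem_fixator_of_crossGram_eq hv₃ hhe hev₃
  refine ⟨a₁, ha₁, b₁, hb₁, a₂, ha₂, b₂, hb₂, (a₁ * b₁ * a₂ * b₂)⁻¹ * h, fun i _ => ?_, by group⟩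
  refine (LinearIsometryEquiv.symm_apply_eq _).mpr ?_
  change h (e i) = a₁ (b₁ (a₂ (b₂ (e i))))
  rw [hb₂v, ha₂v, hb₁v, ha₁v]

theorem norm_crossGram_sub_smul_one_le [DecidableEq κ] {e v : κ → H} (he : Orthonormal 𝕜 e) {δ : ℝ}
    (hv : ∀ i, ‖v i - e i‖ ≤ δ) (i j : κ) :
    ‖(crossGram 𝕜 e v - ((1 - δ : ℝ) : 𝕜) • 1) i j‖ ≤ 2 * δ := by
  have hδ : 0 ≤ δ := (norm_nonneg _).trans (hv i)
  have hinner : ‖⟪e i, v j - e j⟫_𝕜‖ ≤ δ := by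
    refine (norm_inner_le_norm _ _).trans ?_
    rw [he.1, one_mul]
    exact hv j
  have hone : ‖(δ : 𝕜) * (1 : Matrix κ κ 𝕜) i j‖ ≤ δ := by
    rw [norm_mul, RCLike.norm_of_nonneg hδ, Matrix.one_apply]
    split_ifs <;> simp [hδ]
  calc ‖(crossGram 𝕜 e v - ((1 - δ : ℝ) : 𝕜) • 1) i j‖
      = ‖⟪e i, v j - e j⟫_𝕜 + (δ : 𝕜) * (1 : Matrix κ κ 𝕜) i j‖ := by
        congr 1
        rw [← gram_eq_one_iff_orthonormal.mpr he]
        simp only [crossGram, Matrix.sub_apply, Matrix.of_apply, Matrix.smul_apply, smul_eq_mul,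
          inner_sub_right, gram_apply]
        push_cast
        ring
    _ ≤ 2 * δ := by linarith [norm_add_le (⟪e i, v j - e j⟫_𝕜) ((δ : 𝕜) * (1 : Matrix κ κ 𝕜) i j)]

theorem isContraction_fromRows_of_near [Fintype κ] [DecidableEq κ] {e v : κ → H}
    (he : Orthonormal 𝕜 e) {r δ : ℝ} (hδ : δ * (1 + 4 * r ^ 2 * (Fintype.card κ : ℝ) ^ 2) = 1)
    (hv : ∀ i, ‖v i - e i‖ ≤ δ) :
    IsContraction (fromRows (((1 - δ : ℝ) : 𝕜) • (1 : Matrix κ κ 𝕜))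
      ((r : 𝕜) • (crossGram 𝕜 e v - ((1 - δ : ℝ) : 𝕜) • 1))) := by
  have hδ0 : 0 < δ := pos_of_mul_pos_left (hδ ▸ one_pos) (by positivity)
  refine isContraction_fromRows_smul_one ?_
  calc (1 - δ) ^ 2 + ∑ i, ∑ j, ‖((r : 𝕜) • (crossGram 𝕜 e v - ((1 - δ : ℝ) : 𝕜) • 1)) i j‖ ^ 2
      ≤ (1 - δ) ^ 2 + ∑ _i : κ, ∑ _j : κ, (|r| * (2 * δ)) ^ 2 := by
        gcongr with i _ j
        rw [Matrix.smul_apply, norm_smul, RCLike.norm_ofReal]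
        gcongr
        exact norm_crossGram_sub_smul_one_le he hv i j
    _ = (1 - δ) ^ 2 + δ * (δ * (4 * r ^ 2 * (Fintype.card κ : ℝ) ^ 2)) := by
        simp only [Finset.sum_const, Finset.card_univ, nsmul_eq_mul, mul_pow, sq_abs]
        ring
    _ = 1 - δ := by linear_combination δ * hδ
    _ ≤ 1 := by linarith

theorem exists_factorization_of_near [Finite κ] (hinf : ¬ FiniteDimensional 𝕜 H)
    {e f p : κ → H} (he : Orthonormal 𝕜 e) (hf : Orthonormal 𝕜 f) (hef : crossGram 𝕜 e f = 0)
    {c s : ℝ} (hs : s ≠ 0) (hp : ∀ i, p i = (c : 𝕜) • e i + (s : 𝕜) • f i) :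
    ∃ δ > 0, ∀ h : H ≃ₗᵢ[𝕜] H, (∀ i, ‖h (e i) - e i‖ < δ) →
      ∃ a₁ ∈ fixator 𝕜 e Set.univ, ∃ b₁ ∈ fixator 𝕜 p Set.univ, ∃ a₂ ∈ fixator 𝕜 e Set.univ,
      ∃ b₂ ∈ fixator 𝕜 p Set.univ, ∃ a₃ ∈ fixator 𝕜 e Set.univ,
      h = a₁ * b₁ * a₂ * b₂ * a₃ := by
  classical
  have := Fintype.ofFinite κ
  have hpos : 0 < 1 + 4 * (c / s) ^ 2 * (Fintype.card κ : ℝ) ^ 2 := by positivity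
  refine ⟨_, inv_pos.mpr hpos, fun h hh => ?_⟩
  obtain rfl : p = fun i => ((s * (c / s) : ℝ) : 𝕜) • e i + (s : 𝕜) • f i := by
    rw [mul_div_cancel₀ _ hs]
    exact funext hp
  have hδ := inv_mul_cancel₀ hpos.ne'
  refine exists_factorization_of_isContraction hinf he hf hef ?_
    (isContraction_fromRows_of_near he hδ fun i => (hh i).le)
  have hone := isContraction_fromRows_of_near he hδ (v := e) fun i => by simpa using hpos.le
  rwa [crossGram_self, gram_eq_one_iff_orthonormal.mpr he] at hone

end Factorization

section StrongOperatorTopology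

theorem isOpen_strongOperatorTopology [Finite ι] (v : ι → H) (δ : ℝ) :
    IsOpen[strongOperatorTopology 𝕜 H] {h : H ≃ₗᵢ[𝕜] H | ∀ i, ‖h (v i) - v i‖ < δ} := by
  refine isOpen_induced_iff.mpr
    ⟨⋂ i, {F : H → H | ‖F (v i) - v i‖ < δ}, isOpen_iInter_of_finite fun i => ?_, by ext; simp⟩
  exact isOpen_lt (by fun_prop) continuous_const

end StrongOperatorTopology

end UnitarySteinhaus

open UnitarySteinhaus

theorem steinhaus_unitaryGroup_general {𝕜 H : Type*} [RCLike 𝕜] [NormedAddCommGroup H]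
    [InnerProductSpace 𝕜 H] [CompleteSpace H] [TopologicalSpace.SeparableSpace H]
    (hinf : ¬ FiniteDimensional 𝕜 H) {W : Set (H ≃ₗᵢ[𝕜] H)} (hsym : W⁻¹ = W)
    (hW : IsCountablySyndetic W) :
    ∃ V : Set (H ≃ₗᵢ[𝕜] H), IsOpen[strongOperatorTopology 𝕜 H] V ∧ 1 ∈ V ∧ V ⊆ W ^ 208 := by
  obtain ⟨b⟩ := exists_hilbertBasis_nat hinf
  obtain ⟨Φ, hΦ, hΦW⟩ := hW.exists_finite_fixator_subset_pow_forty hsym b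
  have := hΦ.to_subtype
  let e (i : Φ) : H := b i
  have he : Orthonormal 𝕜 e := b.orthonormal.comp _ Subtype.val_injective
  obtain ⟨k, hk, c, s, hs, f, hf, hef, hkf⟩ := hW.exists_rotation_mem_sq hsym hinf he
  have hA : ∀ a ∈ fixator 𝕜 e Set.univ, a ∈ W ^ 40 := fun a ha =>
    hΦW a fun i hi => ha ⟨i, hi⟩ trivial
  have hB : ∀ a ∈ fixator 𝕜 (fun i => k (e i)) Set.univ, a ∈ W ^ 44 := fun a ha =>
    mem_pow_of_conj_mem_pow hsym hk (hA _ (conj_mem_fixator_iff.mpr ha))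
  obtain ⟨δ, hδ, hfactor⟩ := exists_factorization_of_near hinf he hf hef hs hkf
  refine ⟨_, isOpen_strongOperatorTopology e δ, fun i => by simpa using hδ, fun h hh => ?_⟩
  obtain ⟨a₁, ha₁, b₁, hb₁, a₂, ha₂, b₂, hb₂, a₃, ha₃, rfl⟩ := hfactor h hh
  exact mul_mem_pow_add (mul_mem_pow_add (mul_mem_pow_add (mul_mem_pow_add (hA _ ha₁) (hB _ hb₁))
    (hA _ ha₂)) (hB _ hb₂)) (hA _ ha₃)

/-- If `H` is an infinite-dimensional separable complex Hilbert space and `W` is a symmetric,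
countably syndetic subset of the unitary group `U(H)`, then `W ^ 506` contains an open
neighborhood of the identity in the strong operator topology. -/
theorem steinhaus_unitaryGroup
    {H : Type*} [NormedAddCommGroup H] [InnerProductSpace ℂ H] [CompleteSpace H]
    [TopologicalSpace.SeparableSpace H] (hinf : ¬ FiniteDimensional ℂ H)
    (W : Set (H ≃ₗᵢ[ℂ] H)) (hsym : W⁻¹ = W)
    (hsynd : ∃ s : ℕ → (H ≃ₗᵢ[ℂ] H), ∀ g : (H ≃ₗᵢ[ℂ] H), ∃ n : ℕ, g ∈ s n • W) :
    ∃ V : Set (H ≃ₗᵢ[ℂ] H),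
      IsOpen[strongOperatorTopology ℂ H] V ∧ (1 : (H ≃ₗᵢ[ℂ] H)) ∈ V ∧ V ⊆ W ^ 506 := by
  obtain ⟨V, hopen, hone, hV⟩ := steinhaus_unitaryGroup_general hinf hsym hsynd
  have hne := IsCountablySyndetic.nonempty hsynd
  exact ⟨V, hopen, hone, hV.trans (pow_subset_pow_add_two_mul hsym hne 208 149)⟩
end

section
/- Let H be an infinite-dimensional separable real Hilbert space. If W is a symmetric, countably syndetic subset of the orthogonal group O(H), then W^506 contains an open neighborhood of the identity in the strong operator topology. -/
open Pointwise Topology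

/-!
Countable syndeticity enters through a pigeonhole: among uncountably many group elements two have
quotient in `W ^ 2`. Cut a Hilbert basis into countably many blocks. A diagonal argument yields a
block `A` such that every isometry supported on `A` agrees on `A` with an element of `W ^ 2`. The
pigeonhole, applied to shifts indexed by real thresholds, puts in `W ^ 2` a permutation of `A`
moving an infinite set `B` off itself for ever, and every isometry supported on `B` is a commutator
with that permutation. So `W ^ 8` contains the fixator of an infinite, coinfinite set of basis
vectors.

A second pigeonhole, over an almost disjoint family of size continuum, gives two translates of this
set with finite intersection. The fixator of an intersection is a product of four fixators, so
`W ^ 40` contains the fixator of a finite orthonormal family `f`.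

A third pigeonhole, over rotations mixing `f` with an orthogonal copy `y`, gives `w ∈ W ^ 2` with
`w f = c f + σ y` and `σ ≠ 0`. An isometry `g` lies in `Fix f * Fix (w f) * Fix f` as soon as some
orthonormal family has the Gram matrix of `f` against `w f` and that of `g f` against `f`. Such a
family exists when the matrix coefficients of `g` on `f` are close enough to those of
`c ^ 2` times the identity, an open condition met by some `k`; translating by `k⁻¹` gives an open
neighborhood of the identity inside `W ^ 248`.
-/

section Syndetic

variable {G : Type*} [Group G] {W : Set G}

/-- `W` is countably syndetic: countably many left translates of `W` cover the group. -/
def CountablySyndetic (W : Set G) : Prop :=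
  ∃ s : ℕ → G, ∀ g, ∃ n, g ∈ s n • W

theorem inv_mem_pow (hsym : W⁻¹ = W) {n : ℕ} {g : G} (hg : g ∈ W ^ n) : g⁻¹ ∈ W ^ n := by
  rw [← hsym, inv_pow]
  exact Set.inv_mem_inv.2 hg

theorem mul_mem_pow_add {m n : ℕ} {g h : G} (hg : g ∈ W ^ m) (hh : h ∈ W ^ n) :
    g * h ∈ W ^ (m + n) := by
  rw [pow_add]
  exact Set.mul_mem_mul hg hh

theorem inv_mul_mem_sq (hsym : W⁻¹ = W) {t g h : G} (hg : g ∈ t • W) (hh : h ∈ t • W) :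
    g⁻¹ * h ∈ W ^ 2 := by
  rw [Set.mem_smul_set_iff_inv_smul_mem] at hg hh
  have hg' : g⁻¹ * t ∈ W := by
    rw [← hsym]
    simpa using hg
  simpa [sq, mul_assoc] using Set.mul_mem_mul hg' hh

theorem CountablySyndetic.exists_lt_inv_mul_mem_sq (hsynd : CountablySyndetic W)
    (hsym : W⁻¹ = W) {X : Type*} [LinearOrder X] [Uncountable X] (h : X → G) :
    ∃ x y, x < y ∧ (h x)⁻¹ * h y ∈ W ^ 2 := by
  obtain ⟨s, hs⟩ := hsynd
  choose n hn using fun x => hs (h x)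
  obtain ⟨x, y, hxy, hne⟩ : ∃ x y, n x = n y ∧ x ≠ y := by
    simpa [Function.Injective] using fun hinj : n.Injective => not_countable hinj.countable
  wlog hlt : x < y generalizing x y
  · exact this y x hxy.symm hne.symm (hne.lt_or_gt.resolve_left hlt)
  exact ⟨x, y, hlt, inv_mul_mem_sq hsym (hn x) (hxy ▸ hn y)⟩

theorem CountablySyndetic.one_mem_sq (hsynd : CountablySyndetic W) (hsym : W⁻¹ = W) :
    1 ∈ W ^ 2 := by
  obtain ⟨s, hs⟩ := hsynd
  obtain ⟨n, hn⟩ := hs 1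
  simpa using inv_mul_mem_sq hsym hn hn

theorem CountablySyndetic.pow_two_mul_subset (hsynd : CountablySyndetic W) (hsym : W⁻¹ = W)
    {m n : ℕ} (hmn : m ≤ n) : W ^ (2 * m) ⊆ W ^ (2 * n) := by
  rw [pow_mul, pow_mul]
  exact Set.pow_subset_pow_right (hsynd.one_mem_sq hsym) hmn

end Syndetic

section Fixator

variable {𝕜 H : Type*} [RCLike 𝕜] [NormedAddCommGroup H] [InnerProductSpace 𝕜 H]

/-- The subgroup of linear isometries of `H` fixing every vector of `X`. -/
def fixator (𝕜 : Type*) {H : Type*} [RCLike 𝕜] [NormedAddCommGroup H] [InnerProductSpace 𝕜 H]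
    (X : Set H) : Subgroup (H ≃ₗᵢ[𝕜] H) where
  carrier := {u | ∀ x ∈ X, u x = x}
  one_mem' _ _ := rfl
  mul_mem' {u v} hu hv x hx := by
    rw [LinearIsometryEquiv.coe_mul, Function.comp_apply, hv x hx, hu x hx]
  inv_mem' {u} hu x hx := by
    rw [LinearIsometryEquiv.coe_inv, LinearIsometryEquiv.symm_apply_eq, hu x hx]

theorem inv_mul_apply_eq_iff {u v : H ≃ₗᵢ[𝕜] H} {x y : H} : (u⁻¹ * v) x = y ↔ v x = u y := by
  rw [LinearIsometryEquiv.coe_mul, Function.comp_apply, LinearIsometryEquiv.coe_inv,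
    LinearIsometryEquiv.symm_apply_eq]

theorem fixator_antitone : Antitone (fixator 𝕜 : Set H → Subgroup (H ≃ₗᵢ[𝕜] H)) :=
  fun _ _ hXY _ hu x hx => hu x (hXY hx)

theorem inner_apply_of_mem_fixator {X : Set H} {u : H ≃ₗᵢ[𝕜] H} (hu : u ∈ fixator 𝕜 X)
    {x : H} (hx : x ∈ X) (y : H) : inner 𝕜 x (u y) = inner 𝕜 x y := by
  rw [← u.inner_map_map x y, hu x hx]

theorem mem_fixator_image_iff {X : Set H} {u w : H ≃ₗᵢ[𝕜] H} :
    u ∈ fixator 𝕜 (w '' X) ↔ w⁻¹ * u * w ∈ fixator 𝕜 X := by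
  refine Set.forall_mem_image.trans (forall₂_congr fun x _ => ?_)
  rw [mul_assoc, inv_mul_apply_eq_iff, LinearIsometryEquiv.coe_mul, Function.comp_apply]

theorem conj_mem_fixator_image {X : Set H} {u : H ≃ₗᵢ[𝕜] H} (hu : u ∈ fixator 𝕜 X)
    (w : H ≃ₗᵢ[𝕜] H) : w * u * w⁻¹ ∈ fixator 𝕜 (w '' X) :=
  mem_fixator_image_iff.2 (by simpa [mul_assoc] using hu)

theorem fixator_image_subset_pow {W : Set (H ≃ₗᵢ[𝕜] H)} (hsym : W⁻¹ = W) {X : Set H} {m n : ℕ}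
    (hX : (fixator 𝕜 X : Set (H ≃ₗᵢ[𝕜] H)) ⊆ W ^ n) {w : H ≃ₗᵢ[𝕜] H} (hw : w ∈ W ^ m) :
    (fixator 𝕜 (w '' X) : Set (H ≃ₗᵢ[𝕜] H)) ⊆ W ^ (m + n + m) := by
  intro u hu
  have hconj := hX (mem_fixator_image_iff.1 hu)
  simpa [mul_assoc] using mul_mem_pow_add (mul_mem_pow_add hw hconj) (inv_mem_pow hsym hw)

end Fixator

section BasisOperators

open scoped Function

variable {𝕜 H I : Type*} [RCLike 𝕜] [NormedAddCommGroup H] [InnerProductSpace 𝕜 H]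

theorem isometryEquiv_ext_hilbertBasis (b : HilbertBasis I 𝕜 H) {u v : H ≃ₗᵢ[𝕜] H}
    (h : ∀ i, u (b i) = v (b i)) : u = v := by
  have hcont : (u.toContinuousLinearEquiv : H →L[𝕜] H) = v.toContinuousLinearEquiv :=
    ContinuousLinearMap.ext_on (Submodule.dense_iff_topologicalClosure_eq_top.2 b.dense_span)
      (Set.forall_mem_range.2 h)
  exact LinearIsometryEquiv.ext fun x => congr($hcont x)

theorem exists_isometryEquiv_hilbertBasis (b b' : HilbertBasis I 𝕜 H) :
    ∃ u : H ≃ₗᵢ[𝕜] H, ∀ i, u (b i) = b' i := by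
  classical
  refine ⟨b.repr.trans b'.repr.symm, fun i => ?_⟩
  rw [LinearIsometryEquiv.trans_apply, b.repr_self, b'.repr_symm_single]

theorem mem_fixator_basis_image {b : I → H} {S : Set I} {u : H ≃ₗᵢ[𝕜] H} :
    u ∈ fixator 𝕜 (b '' S) ↔ ∀ i ∈ S, u (b i) = b i :=
  Set.forall_mem_image

theorem inner_apply_eq_zero_of_mem_fixator {b : I → H} (hb : Orthonormal 𝕜 b) {S : Set I}
    {u : H ≃ₗᵢ[𝕜] H} (hu : u ∈ fixator 𝕜 (b '' S)) {i j : I} (hi : i ∈ S) (hj : j ∉ S) :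
    inner 𝕜 (b i) (u (b j)) = 0 := by
  rw [inner_apply_of_mem_fixator hu (Set.mem_image_of_mem b hi)]
  exact hb.inner_eq_zero (ne_of_mem_of_not_mem hi hj)

theorem apply_eq_self_of_mem_fixator (b : HilbertBasis I 𝕜 H) {S : Set I} {u : H ≃ₗᵢ[𝕜] H}
    (hu : u ∈ fixator 𝕜 (b '' S)) {x : H} (hx : ∀ i ∉ S, inner 𝕜 (b i) x = 0) : u x = x := by
  have hsum := (b.hasSum_repr x).mapL (u.toContinuousLinearEquiv : H →L[𝕜] H)
  refine hsum.unique ?_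
  convert b.hasSum_repr x using 2 with i
  rw [map_smul]
  by_cases hi : i ∈ S
  · exact congr(_ • $(hu (b i) (Set.mem_image_of_mem b hi)))
  · rw [b.repr_apply_apply, hx i hi, zero_smul, zero_smul]

theorem apply_apply_basis_of_union_eq_univ (b : HilbertBasis I 𝕜 H) {S T : Set I}
    (hST : S ∪ T = Set.univ) {u v : H ≃ₗᵢ[𝕜] H} (hu : u ∈ fixator 𝕜 (b '' S))
    (hv : v ∈ fixator 𝕜 (b '' T)) {i : I} (hi : i ∉ T) : u (v (b i)) = v (b i) := by
  refine apply_eq_self_of_mem_fixator b hu fun j hj => ?_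
  have hjT : j ∈ T := (hST.symm.subset (Set.mem_univ j)).resolve_left hj
  exact inner_apply_eq_zero_of_mem_fixator b.orthonormal hv hjT hi

theorem commute_of_mem_fixator_of_union_eq_univ (b : HilbertBasis I 𝕜 H) {S T : Set I}
    (hST : S ∪ T = Set.univ) {u v : H ≃ₗᵢ[𝕜] H} (hu : u ∈ fixator 𝕜 (b '' S))
    (hv : v ∈ fixator 𝕜 (b '' T)) : Commute u v := by
  rw [mem_fixator_basis_image] at *
  refine isometryEquiv_ext_hilbertBasis b fun i => ?_
  simp only [LinearIsometryEquiv.coe_mul, Function.comp_apply]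
  by_cases hT : i ∈ T
  · rw [hv i hT]
    by_cases hS : i ∈ S
    · rw [hu i hS, hv i hT]
    · rw [apply_apply_basis_of_union_eq_univ b (Set.union_comm S T ▸ hST)
        (mem_fixator_basis_image.2 hv) (mem_fixator_basis_image.2 hu) hS]
  · have hS : i ∈ S := (hST.symm.subset (Set.mem_univ i)).resolve_right hT
    rw [hu i hS, apply_apply_basis_of_union_eq_univ b hST
      (mem_fixator_basis_image.2 hu) (mem_fixator_basis_image.2 hv) hT]

section Glue

variable {P : Type*} (b : HilbertBasis I 𝕜 H) {p : I → P} {U : P → H ≃ₗᵢ[𝕜] H}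

theorem orthonormal_glue (hU : ∀ q, U q ∈ fixator 𝕜 (b '' {i | p i ≠ q})) :
    Orthonormal 𝕜 fun i => U (p i) (b i) := by
  refine ⟨fun i => by rw [LinearIsometryEquiv.norm_map, b.orthonormal.norm_eq_one],
    fun i j hij => ?_⟩
  by_cases hp : p i = p j
  · simpa only [hp, LinearIsometryEquiv.inner_map_map] using b.orthonormal.inner_eq_zero hij
  · change inner 𝕜 (U (p i) (b i)) (U (p j) (b j)) = 0
    have hfix : U (p i) (U (p j) (b j)) = U (p j) (b j) :=
      apply_apply_basis_of_union_eq_univ b (Set.eq_univ_of_forall fun k => by grind)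
        (hU (p i)) (hU (p j)) (by simp)
    rw [← hfix, LinearIsometryEquiv.inner_map_map]
    exact inner_apply_eq_zero_of_mem_fixator b.orthonormal (hU (p j)) hp (by simp)

theorem orthogonal_span_glue (hU : ∀ q, U q ∈ fixator 𝕜 (b '' {i | p i ≠ q})) :
    (Submodule.span 𝕜 (Set.range fun i => U (p i) (b i)))ᗮ = ⊥ := by
  refine (Submodule.eq_bot_iff _).2 fun x hx => ?_
  have hx' : ∀ i, inner 𝕜 (U (p i) (b i)) x = 0 := fun i =>
    hx _ (Submodule.subset_span (Set.mem_range_self i))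
  refine b.repr.map_eq_zero_iff.1 (lp.ext (funext fun i => ?_))
  rw [b.repr_apply_apply, lp.coeFn_zero, Pi.zero_apply]
  set y := (U (p i)).symm x
  have hy : ∀ j, p j = p i → inner 𝕜 (b j) y = 0 := fun j hj => by
    rw [← hx' j, hj, LinearIsometryEquiv.inner_map_eq_flip]
  have hfix : U (p i) y = y :=
    apply_eq_self_of_mem_fixator b (hU (p i)) fun j hj => hy j (not_not.1 hj)
  rw [← (U (p i)).apply_symm_apply x, hfix, hy i rfl]

variable [CompleteSpace H]

theorem exists_glue (hU : ∀ q, U q ∈ fixator 𝕜 (b '' {i | p i ≠ q})) :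
    ∃ g : H ≃ₗᵢ[𝕜] H, ∀ i, g (b i) = U (p i) (b i) := by
  obtain ⟨g, hg⟩ := exists_isometryEquiv_hilbertBasis b
    (HilbertBasis.mkOfOrthogonalEqBot (orthonormal_glue b hU) (orthogonal_span_glue b hU))
  exact ⟨g, fun i => by rw [hg, HilbertBasis.coe_mkOfOrthogonalEqBot]⟩

theorem exists_glue_of_pairwise_disjoint {A : P → Set I} (hA : Pairwise (Disjoint on A))
    (hU : ∀ q, U q ∈ fixator 𝕜 (b '' (A q)ᶜ)) :
    ∃ g ∈ fixator 𝕜 (b '' (⋃ q, A q)ᶜ), ∀ q, ∀ i ∈ A q, g (b i) = U q (b i) := by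
  have hlabel : ∀ i, ∃ o : Option P, ∀ q, o = some q ↔ i ∈ A q := fun i => by
    by_cases hi : ∃ q, i ∈ A q
    · obtain ⟨q, hq⟩ := hi
      refine ⟨some q, fun r => ⟨fun h => Option.some_injective _ h ▸ hq, fun hr => ?_⟩⟩
      rw [hA.eq (Set.not_disjoint_iff.2 ⟨i, hq, hr⟩)]
    · exact ⟨none, fun q => ⟨nofun, fun hq => (hi ⟨q, hq⟩).elim⟩⟩
  choose p hp using hlabel
  let U' : Option P → H ≃ₗᵢ[𝕜] H := fun o => o.elim 1 U
  have hU' : ∀ o, U' o ∈ fixator 𝕜 (b '' {i | p i ≠ o})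
    | none => one_mem _
    | some q => by
      simp only [ne_eq, hp]
      exact hU q
  obtain ⟨g, hg⟩ := exists_glue b hU'
  refine ⟨g, mem_fixator_basis_image.2 fun i hi => ?_, fun q i hi => ?_⟩
  · have hnone : p i = none := Option.eq_none_iff_forall_ne_some.2 fun q hq =>
      hi (Set.mem_iUnion.2 ⟨q, (hp i q).1 hq⟩)
    rw [hg, hnone]
    rfl
  · rw [hg, (hp i q).2 hi]
    rfl

end Glue

section Swindle

variable [CompleteSpace H]

theorem orthogonal_span_basis_comp_perm (b : HilbertBasis I 𝕜 H) (σ : Equiv.Perm I) :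
    (Submodule.span 𝕜 (Set.range (b ∘ σ)))ᗮ = ⊥ := by
  rw [σ.surjective.range_comp, ← Submodule.topologicalClosure_eq_top_iff]
  exact b.dense_span

theorem exists_perm_representation (b : HilbertBasis I 𝕜 H) :
    ∃ π : Equiv.Perm I →* (H ≃ₗᵢ[𝕜] H), ∀ σ i, π σ (b i) = b (σ i) := by
  have hperm : ∀ σ : Equiv.Perm I, ∃ u : H ≃ₗᵢ[𝕜] H, ∀ i, u (b i) = b (σ i) := fun σ => by
    obtain ⟨u, hu⟩ := exists_isometryEquiv_hilbertBasis b (HilbertBasis.mkOfOrthogonalEqBot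
      (b.orthonormal.comp σ σ.injective) (orthogonal_span_basis_comp_perm b σ))
    exact ⟨u, fun i => by rw [hu, HilbertBasis.coe_mkOfOrthogonalEqBot, Function.comp_apply]⟩
  choose π hπ using hperm
  refine ⟨MonoidHom.mk' π fun σ τ => isometryEquiv_ext_hilbertBasis b fun i => ?_, hπ⟩
  simp only [LinearIsometryEquiv.coe_mul, Function.comp_apply, hπ, Equiv.Perm.mul_apply]

/-- The representation of the permutations of `I` by linear isometries of `H` that permute the
vectors of the Hilbert basis `b`. -/
noncomputable def permOperator (b : HilbertBasis I 𝕜 H) : Equiv.Perm I →* (H ≃ₗᵢ[𝕜] H) :=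
  (exists_perm_representation b).choose

theorem permOperator_apply (b : HilbertBasis I 𝕜 H) (σ : Equiv.Perm I) (i : I) :
    permOperator b σ (b i) = b (σ i) :=
  (exists_perm_representation b).choose_spec σ i

theorem permOperator_image (b : HilbertBasis I 𝕜 H) (σ : Equiv.Perm I) (S : Set I) :
    permOperator b σ '' (b '' S) = b '' (σ '' S) := by
  simp only [Set.image_image, permOperator_apply]

theorem conj_permOperator_mem_fixator_compl (b : HilbertBasis I 𝕜 H) (σ : Equiv.Perm I)
    {B : Set I} {u : H ≃ₗᵢ[𝕜] H} (hu : u ∈ fixator 𝕜 (b '' Bᶜ)) :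
    permOperator b σ * u * (permOperator b σ)⁻¹ ∈ fixator 𝕜 (b '' (σ '' B)ᶜ) := by
  rw [← Set.image_compl_eq σ.bijective, ← permOperator_image]
  exact conj_mem_fixator_image hu _

theorem apply_mem_pow_succ_image_iff {σ : Equiv.Perm I} {B : Set I} {m : ℕ} {i : I} :
    σ i ∈ ⇑(σ ^ (m + 1)) '' B ↔ i ∈ ⇑(σ ^ m) '' B := by
  rw [pow_succ', Equiv.Perm.coe_mul, Set.image_comp, σ.injective.mem_set_image]

-- `g` is the infinite product of the conjugates `s ^ m * u * s⁻¹ ^ m` of `u`, one on each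
-- translate of `B`, so conjugating by `s` drops exactly the factor `u`.
theorem exists_eq_commutator_of_wandering (b : HilbertBasis I 𝕜 H) {σ : Equiv.Perm I}
    {B : Set I} (hB : Pairwise (Disjoint on fun m : ℕ => ⇑(σ ^ m) '' B)) {u : H ≃ₗᵢ[𝕜] H}
    (hu : u ∈ fixator 𝕜 (b '' Bᶜ)) :
    ∃ g ∈ fixator 𝕜 (b '' (⋃ m : ℕ, ⇑(σ ^ m) '' B)ᶜ),
      u = g * permOperator b σ * g⁻¹ * (permOperator b σ)⁻¹ := by
  have hU : ∀ m : ℕ, _ := fun m => conj_permOperator_mem_fixator_compl b (σ ^ m) hu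
  obtain ⟨g, hg, hgB⟩ := exists_glue_of_pairwise_disjoint b hB hU
  simp only [map_pow] at hU hgB
  set s := permOperator b σ with hs
  refine ⟨g, hg, ?_⟩
  suffices h : g = u * (s * g * s⁻¹) by
    simpa [mul_assoc] using eq_mul_inv_of_mul_eq h.symm
  refine isometryEquiv_ext_hilbertBasis b (σ.surjective.forall.2 fun i => ?_)
  have hconj : (s * g * s⁻¹) (b (σ i)) = s (g (b i)) := by
    simp only [LinearIsometryEquiv.coe_mul, Function.comp_apply, LinearIsometryEquiv.coe_inv]
    rw [← permOperator_apply, ← hs, s.symm_apply_apply]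
  rw [LinearIsometryEquiv.coe_mul, Function.comp_apply, hconj]
  by_cases hi : ∃ m : ℕ, i ∈ ⇑(σ ^ m) '' B
  · obtain ⟨m, hm⟩ := hi
    have hσi := apply_mem_pow_succ_image_iff.2 hm
    have hdisj : Disjoint B (⇑(σ ^ (m + 1)) '' B) := by
      simpa [Function.onFun] using hB (Nat.succ_ne_zero m).symm
    have hsg : s (g (b i)) = g (b (σ i)) := by
      rw [hgB m i hm, hgB (m + 1) (σ i) hσi, ← permOperator_apply, ← hs, pow_succ']
      simp [LinearIsometryEquiv.coe_mul]
    rw [hsg, hgB (m + 1) (σ i) hσi, apply_apply_basis_of_union_eq_univ b ?_ hu (hU _)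
      (Set.notMem_compl_iff.2 hσi)]
    rw [← Set.compl_inter, hdisj.inter_eq, Set.compl_empty]
  · have hgi : g (b i) = b i := hg _ ⟨i, by simpa using hi, rfl⟩
    rw [hgi, permOperator_apply]
    by_cases hσi : σ i ∈ B
    · simpa using hgB 0 (σ i) (by simpa using hσi)
    · rw [hu _ ⟨_, hσi, rfl⟩, hg _ ⟨_, ?_, rfl⟩]
      rw [Set.mem_compl_iff, Set.mem_iUnion]
      rintro ⟨_ | m, hm⟩
      · exact hσi (by simpa using hm)
      · exact hi ⟨m, apply_mem_pow_succ_image_iff.1 hm⟩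

end Swindle

end BasisOperators

section FixatorInPower

open scoped Function

variable {𝕜 H I : Type*} [RCLike 𝕜] [NormedAddCommGroup H] [InnerProductSpace 𝕜 H]
  [CompleteSpace H] {W : Set (H ≃ₗᵢ[𝕜] H)}

theorem CountablySyndetic.exists_block_extension (hsynd : CountablySyndetic W) (hsym : W⁻¹ = W)
    (b : HilbertBasis I 𝕜 H) {A : ℕ → Set I} (hA : Pairwise (Disjoint on A)) :
    ∃ n, ∀ u ∈ fixator 𝕜 (b '' (A n)ᶜ), ∃ g ∈ W ^ 2, u⁻¹ * g ∈ fixator 𝕜 (b '' A n) := by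
  obtain ⟨s, hs⟩ := hsynd
  have htranslate : ∃ n, ∀ u ∈ fixator 𝕜 (b '' (A n)ᶜ), ∃ g ∈ s n • W,
      ∀ i ∈ A n, g (b i) = u (b i) := by
    by_contra! hcon
    choose U hU hbad using hcon
    obtain ⟨g, -, hg⟩ := exists_glue_of_pairwise_disjoint b hA hU
    obtain ⟨n, hn⟩ := hs g
    obtain ⟨i, hi, hne⟩ := hbad n g hn
    exact hne (hg n i hi)
  obtain ⟨n, hn⟩ := htranslate
  refine ⟨n, fun u hu => ?_⟩
  obtain ⟨g, hgW, hg⟩ := hn u hu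
  obtain ⟨g', hgW', hg'⟩ := hn 1 (one_mem _)
  refine ⟨g'⁻¹ * g, inv_mul_mem_sq hsym hgW' hgW, mem_fixator_basis_image.2 fun i hi => ?_⟩
  have hfix : g' (u (b i)) = u (b i) :=
    apply_apply_basis_of_union_eq_univ b (Set.union_compl_self (A n))
      (mem_fixator_basis_image.2 hg') hu (Set.notMem_compl_iff.2 hi)
  rw [inv_mul_apply_eq_iff, inv_mul_apply_eq_iff, hg i hi, hfix]

theorem conj_eq_conj_of_commute {G : Type*} [Group G] {g g' w : G} (h : Commute (g⁻¹ * g') w) :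
    g * w * g⁻¹ = g' * w * g'⁻¹ :=
  calc g * w * g⁻¹ = g * (w * (g⁻¹ * g')) * g'⁻¹ := by group
    _ = g' * w * g'⁻¹ := by rw [← h.eq]; group

theorem fixator_compl_subset_pow_eight (hsym : W⁻¹ = W) (b : HilbertBasis I 𝕜 H) {A B : Set I}
    {σ : Equiv.Perm I}
    (hA : ∀ u ∈ fixator 𝕜 (b '' Aᶜ), ∃ g ∈ W ^ 2, u⁻¹ * g ∈ fixator 𝕜 (b '' A))
    (hσ : ∀ i ∉ A, σ i = i) (hσW : permOperator b σ ∈ W ^ 2)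
    (hB : Pairwise (Disjoint on fun m : ℕ => ⇑(σ ^ m) '' B))
    (hBA : ⋃ m : ℕ, ⇑(σ ^ m) '' B ⊆ A) :
    (fixator 𝕜 (b '' Bᶜ) : Set (H ≃ₗᵢ[𝕜] H)) ⊆ W ^ 8 := by
  intro u hu
  obtain ⟨g, hg, rfl⟩ := exists_eq_commutator_of_wandering b hB hu
  obtain ⟨g', hgW', hgg'⟩ :=
    hA g (fixator_antitone (Set.image_mono (Set.compl_subset_compl.2 hBA)) hg)
  have hσfix : permOperator b σ ∈ fixator 𝕜 (b '' Aᶜ) :=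
    mem_fixator_basis_image.2 fun i hi => by rw [permOperator_apply, hσ i hi]
  rw [conj_eq_conj_of_commute
    (commute_of_mem_fixator_of_union_eq_univ b (Set.union_compl_self A) hgg' hσfix)]
  exact mul_mem_pow_add (mul_mem_pow_add (mul_mem_pow_add hgW' hσW) (inv_mem_pow hsym hgW'))
    (inv_mem_pow hsym hσW)

section FiberShift

variable {A B : Type*}

/-- The permutation of `A × ℤ × B` translating the integer coordinate by `c a` over `a : A`. -/
def fiberShift (c : A → ℤ) : Equiv.Perm (A × ℤ × B) where
  toFun i := (i.1, i.2.1 + c i.1, i.2.2)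
  invFun i := (i.1, i.2.1 - c i.1, i.2.2)
  left_inv i := by simp
  right_inv i := by simp

theorem fiberShift_apply (c : A → ℤ) (i : A × ℤ × B) :
    fiberShift c i = (i.1, i.2.1 + c i.1, i.2.2) :=
  rfl

theorem inv_fiberShift_mul_fiberShift (c d : A → ℤ) :
    (fiberShift c)⁻¹ * fiberShift d = (fiberShift (d - c) : Equiv.Perm (A × ℤ × B)) := by
  rw [inv_mul_eq_iff_eq_mul]
  exact Equiv.ext fun i => by simp [fiberShift_apply, add_assoc]

theorem fiberShift_pow_apply (c : A → ℤ) (m : ℕ) (i : A × ℤ × B) :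
    (fiberShift c ^ m) i = (i.1, i.2.1 + m * c i.1, i.2.2) := by
  induction m with
  | zero => simp
  | succ m ih =>
    rw [pow_succ', Equiv.Perm.mul_apply, ih, fiberShift_apply]
    push_cast
    ring_nf

theorem fiberShift_pow_image_subset {c : A → ℤ} {a : A} (hca : c a = 1) (m : ℕ) :
    ⇑(fiberShift c ^ m) '' {i : A × ℤ × B | i.1 = a ∧ i.2.1 = 0} ⊆
      {i | i.1 = a ∧ i.2.1 = m} := by
  rintro _ ⟨i, ⟨rfl, h0⟩, rfl⟩
  simp [fiberShift_pow_apply, h0, hca]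

end FiberShift

theorem CountablySyndetic.exists_fiberShift_mem_sq (hsynd : CountablySyndetic W)
    (hsym : W⁻¹ = W) (b : HilbertBasis ((ℕ × ℚ) × ℤ × ℕ) 𝕜 H) (n : ℕ) :
    ∃ (d : ℕ × ℚ → ℤ) (q : ℚ), d (n, q) = 1 ∧ (∀ a, a.1 ≠ n → d a = 0) ∧
      permOperator b (fiberShift d) ∈ W ^ 2 := by
  classical
  -- The shifts for thresholds `x < y` differ on the fibres over the rationals in `[x, y)`.
  let c : ℝ → ℕ × ℚ → ℤ := fun x a => if a.1 = n ∧ (a.2 : ℝ) < x then 1 else 0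
  obtain ⟨x, y, hxy, hW⟩ :=
    hsynd.exists_lt_inv_mul_mem_sq hsym fun x => permOperator b (fiberShift (c x))
  obtain ⟨q, hxq, hqy⟩ := exists_rat_btwn hxy
  rw [← map_inv, ← map_mul, inv_fiberShift_mul_fiberShift] at hW
  exact ⟨c y - c x, q, by simp [c, hqy, hxq.le], fun a ha => by simp [c, ha], hW⟩

theorem CountablySyndetic.exists_fixator_subset_pow_eight (hsynd : CountablySyndetic W)
    (hsym : W⁻¹ = W) (b : HilbertBasis ((ℕ × ℚ) × ℤ × ℕ) 𝕜 H) :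
    ∃ S : Set ((ℕ × ℚ) × ℤ × ℕ), S.Infinite ∧ Sᶜ.Infinite ∧
      (fixator 𝕜 (b '' S) : Set (H ≃ₗᵢ[𝕜] H)) ⊆ W ^ 8 := by
  obtain ⟨n, hn⟩ := hsynd.exists_block_extension hsym b (A := fun n => {i | i.1.1 = n})
    fun m n hmn => Set.disjoint_left.2 fun i hm hn => hmn (hm.symm.trans hn)
  obtain ⟨d, q, hdq, hd, hdW⟩ := hsynd.exists_fiberShift_mem_sq hsym b n
  refine ⟨{i | i.1 = (n, q) ∧ i.2.1 = 0}ᶜ, ?_, ?_, ?_⟩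
  · exact Set.infinite_of_injective_forall_mem (f := fun k : ℕ => ((n, q), (1 : ℤ), k))
      (fun k l h => by simpa using h) (by simp)
  · rw [compl_compl]
    exact Set.infinite_of_injective_forall_mem (f := fun k : ℕ => ((n, q), (0 : ℤ), k))
      (fun k l h => by simpa using h) (by simp)
  · have himage := fiberShift_pow_image_subset (B := ℕ) hdq
    refine fixator_compl_subset_pow_eight hsym b hn ?_ hdW ?_ ?_
    · exact fun i hi => by simp [fiberShift_apply, hd _ hi]
    · refine fun l m hlm => Set.disjoint_left.2 fun i hl hm => hlm ?_
      exact_mod_cast (himage l hl).2.symm.trans (himage m hm).2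
    · exact Set.iUnion_subset fun m i hi => congr(($((himage m hi).1)).1)

end FixatorInPower

section OrthonormalFamilies

variable {𝕜 H I J K : Type*} [RCLike 𝕜] [NormedAddCommGroup H] [InnerProductSpace 𝕜 H]

theorem orthonormal_sumElim {e : K → H} {f : J → H} (he : Orthonormal 𝕜 e)
    (hf : Orthonormal 𝕜 f) (hef : ∀ k j, inner 𝕜 (e k) (f j) = 0) :
    Orthonormal 𝕜 (Sum.elim e f) := by
  refine ⟨Sum.rec he.1 hf.1, ?_⟩
  rintro (k | j) (k' | j') h
  · exact he.2 (ne_of_apply_ne _ h)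
  · exact hef k j'
  · exact inner_eq_zero_symm.1 (hef k' j)
  · exact hf.2 (ne_of_apply_ne _ h)

theorem mem_orthogonal_span_iff {s : Set H} {x : H} :
    x ∈ (Submodule.span 𝕜 s)ᗮ ↔ ∀ y ∈ s, inner 𝕜 y x = 0 := by
  refine ⟨fun hx y hy => hx y (Submodule.subset_span hy), fun h y hy => ?_⟩
  have hle : Submodule.span 𝕜 s ≤ (𝕜 ∙ x)ᗮ := Submodule.span_le.2 fun z hz =>
    Submodule.mem_orthogonal_singleton_iff_inner_left.2 (h z hz)
  exact Submodule.mem_orthogonal_singleton_iff_inner_left.1 (hle hy)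

theorem not_finiteDimensional_of_orthonormal_mem [Infinite J] {y : J → H}
    (hy : Orthonormal 𝕜 y) {V : Submodule 𝕜 H} (hyV : ∀ j, y j ∈ V) :
    ¬ FiniteDimensional 𝕜 V := fun _ => by
  have hli : LinearIndependent 𝕜 fun j => (⟨y j, hyV j⟩ : V) :=
    .of_comp V.subtype hy.linearIndependent
  exact not_finite_iff_infinite.2 ‹Infinite J› hli.finite

theorem exists_unit_vector_orthogonal {V : Submodule 𝕜 H} (hV : ¬ FiniteDimensional 𝕜 V)
    {t : Set H} (ht : t.Finite) :
    ∃ v ∈ V, ‖v‖ = 1 ∧ ∀ x ∈ t, inner 𝕜 x v = 0 := by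
  have := ht.to_subtype
  let L : V →ₗ[𝕜] (t → 𝕜) := LinearMap.pi fun x => (innerₛₗ 𝕜 (x : H)).comp V.subtype
  have hker : LinearMap.ker L ≠ ⊥ := fun hbot =>
    hV (Module.Finite.of_injective L (LinearMap.ker_eq_bot.1 hbot))
  obtain ⟨v, hv, hv0⟩ := Submodule.exists_mem_ne_zero_of_ne_bot hker
  refine ⟨((‖v‖ : 𝕜)⁻¹) • v, V.smul_mem _ v.2, norm_smul_inv_norm (by simpa using hv0),
    fun x hx => ?_⟩
  have hxv : inner 𝕜 x (v : H) = 0 := congr_fun (LinearMap.mem_ker.1 hv) ⟨x, hx⟩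
  rw [inner_smul_right, hxv, mul_zero]

theorem exists_orthonormal_nat_mem {V : ℕ → Submodule 𝕜 H}
    (hV : ∀ n, ¬ FiniteDimensional 𝕜 (V n)) :
    ∃ x : ℕ → H, Orthonormal 𝕜 x ∧ ∀ n, x n ∈ V n := by
  classical
  choose F hFV hF1 hF using fun (n : ℕ) (t : Finset H) =>
    exists_unit_vector_orthogonal (hV n) t.finite_toSet
  let s : ℕ → Finset H := Nat.rec ∅ fun n t => insert (F n t) t
  have hs : Monotone s := monotone_nat_of_le_succ fun n => Finset.subset_insert _ _
  have hmem : ∀ {m n}, m < n → F m (s m) ∈ s n := fun {m n} hmn =>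
    hs (Nat.succ_le_of_lt hmn) (Finset.mem_insert_self _ _)
  refine ⟨fun n => F n (s n), ⟨fun n => hF1 n _, fun m n hmn => ?_⟩, fun n => hFV n _⟩
  rcases hmn.lt_or_gt with h | h
  · exact hF n (s n) _ (hmem h)
  · exact inner_eq_zero_symm.1 (hF m (s m) _ (hmem h))

theorem exists_orthonormal_mem [Countable K] [Infinite K] {V : K → Submodule 𝕜 H}
    (hV : ∀ k, ¬ FiniteDimensional 𝕜 (V k)) :
    ∃ x : K → H, Orthonormal 𝕜 x ∧ ∀ k, x k ∈ V k := by
  obtain ⟨φ⟩ := nonempty_equiv_of_countable (α := K) (β := ℕ)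
  obtain ⟨x, hx, hxV⟩ := exists_orthonormal_nat_mem fun n => hV (φ.symm n)
  exact ⟨x ∘ φ, hx.comp φ φ.injective, fun k => by simpa using hxV (φ k)⟩

theorem countable_of_orthonormal [TopologicalSpace.SeparableSpace H] {e : K → H}
    (he : Orthonormal 𝕜 e) : Countable K := by
  refine Pairwise.countable_of_isOpen_disjoint (s := fun k => Metric.ball (e k) (1 / 2))
    (fun k l hkl => Metric.ball_disjoint_ball ?_) (fun k => Metric.isOpen_ball)
    (fun k => ⟨e k, Metric.mem_ball_self (by norm_num)⟩)
  have hsq := norm_sub_sq (𝕜 := 𝕜) (e k) (e l)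
  rw [he.1 k, he.1 l, he.2 hkl, map_zero] at hsq
  rw [dist_eq_norm]
  nlinarith [norm_nonneg (e k - e l)]

variable [CompleteSpace H] [TopologicalSpace.SeparableSpace H]

theorem nonempty_hilbertBasis [Countable J] [Infinite J] (hH : ¬ FiniteDimensional 𝕜 H) :
    Nonempty (HilbertBasis J 𝕜 H) := by
  obtain ⟨w, b, -⟩ := exists_hilbertBasis 𝕜 H
  have : Countable w := countable_of_orthonormal b.orthonormal
  have : Infinite w := by
    by_contra hfin
    have : Finite w := not_infinite_iff_finite.1 hfin
    have := Fintype.ofFinite w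
    exact hH (Module.Finite.of_basis b.toOrthonormalBasis.toBasis)
  obtain ⟨φ⟩ := nonempty_equiv_of_countable (α := J) (β := w)
  refine ⟨HilbertBasis.mkOfOrthogonalEqBot (b.orthonormal.comp φ φ.injective) ?_⟩
  rw [φ.surjective.range_comp, ← Submodule.topologicalClosure_eq_top_iff]
  exact b.dense_span

theorem exists_hilbertBasis_extending [Countable J] [Infinite J] {e : K → H}
    (he : Orthonormal 𝕜 e) (hinf : ¬ FiniteDimensional 𝕜 (Submodule.span 𝕜 (Set.range e))ᗮ) :
    ∃ b : HilbertBasis (K ⊕ J) 𝕜 H, ∀ k, b (Sum.inl k) = e k := by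
  set U := (Submodule.span 𝕜 (Set.range e))ᗮ
  obtain ⟨f⟩ := nonempty_hilbertBasis (J := J) hinf
  have hf : Orthonormal 𝕜 fun j => (f j : H) := f.orthonormal.comp_linearIsometry U.subtypeₗᵢ
  have hef : Orthonormal 𝕜 (Sum.elim e fun j => (f j : H)) := orthonormal_sumElim he hf
    fun k j => mem_orthogonal_span_iff.1 (f j).2 _ (Set.mem_range_self k)
  refine ⟨HilbertBasis.mkOfOrthogonalEqBot hef ((Submodule.eq_bot_iff _).2 fun x hx => ?_),
    fun k => by rw [HilbertBasis.coe_mkOfOrthogonalEqBot, Sum.elim_inl]⟩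
  rw [mem_orthogonal_span_iff, Set.forall_mem_range] at hx
  have hxU : x ∈ U :=
    mem_orthogonal_span_iff.2 (Set.forall_mem_range.2 fun k => hx (Sum.inl k))
  have hrepr : f.repr ⟨x, hxU⟩ = 0 := lp.ext <| funext fun j => by
    rw [f.repr_apply_apply, lp.coeFn_zero, Pi.zero_apply]
    exact hx (Sum.inr j)
  simpa using hrepr

theorem exists_isometryEquiv_apply_eq {e e' : I → H} (he : Orthonormal 𝕜 e)
    (he' : Orthonormal 𝕜 e') {Q : Set I} (hQ : Qᶜ.Infinite) :
    ∃ u : H ≃ₗᵢ[𝕜] H, ∀ i ∈ Q, u (e i) = e' i := by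
  have := hQ.to_subtype
  have hextend : ∀ {e : I → H}, Orthonormal 𝕜 e →
      ∃ b : HilbertBasis (Q ⊕ ℕ) 𝕜 H, ∀ i : Q, b (Sum.inl i) = e i := fun {e} he => by
    refine exists_hilbertBasis_extending (he.comp _ Subtype.val_injective)
      (not_finiteDimensional_of_orthonormal_mem (J := ↥Qᶜ) (he.comp _ Subtype.val_injective)
        fun j => mem_orthogonal_span_iff.2 (Set.forall_mem_range.2 fun i =>
          he.inner_eq_zero (ne_of_mem_of_not_mem i.2 j.2)))
  obtain ⟨b, hb⟩ := hextend he
  obtain ⟨b', hb'⟩ := hextend he'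
  obtain ⟨u, hu⟩ := exists_isometryEquiv_hilbertBasis b b'
  exact ⟨u, fun i hi => by rw [← hb ⟨i, hi⟩, hu, hb']⟩

theorem exists_mem_fixator_apply_eq {b e : I → H} (hb : Orthonormal 𝕜 b) (he : Orthonormal 𝕜 e)
    {S Q : Set I} (hSQ : S ⊆ Q) (hQ : Qᶜ.Infinite)
    (hbe : ∀ i ∈ S, ∀ j ∉ S, inner 𝕜 (b i) (e j) = 0) :
    ∃ u ∈ fixator 𝕜 (b '' S), ∀ i ∈ Q \ S, u (e i) = b i := by
  classical
  have he' : Orthonormal 𝕜 (S.piecewise b e) := by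
    refine ⟨fun i => ?_, fun i j hij => ?_⟩
    · by_cases hi : i ∈ S <;> simp [hi, hb.1 i, he.1 i]
    · by_cases hi : i ∈ S <;> by_cases hj : j ∈ S
      · simpa [hi, hj] using hb.2 hij
      · simpa [hi, hj] using hbe i hi j hj
      · simpa [hi, hj] using inner_eq_zero_symm.1 (hbe j hj i hi)
      · simpa [hi, hj] using he.2 hij
  obtain ⟨u, hu⟩ := exists_isometryEquiv_apply_eq he' hb hQ
  refine ⟨u, mem_fixator_basis_image.2 fun i hi => ?_, fun i hi => ?_⟩
  · simpa [hi] using hu i (hSQ hi)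
  · simpa [hi.2] using hu i hi.1

end OrthonormalFamilies

section Factorization

variable {𝕜 H I : Type*} [RCLike 𝕜] [NormedAddCommGroup H] [InnerProductSpace 𝕜 H]

theorem exists_orthonormal_orthogonal [Countable I] {b : I → H} (hb : Orthonormal 𝕜 b)
    {S T : Set I} (hST : (S ∪ T)ᶜ.Infinite) (g : H ≃ₗᵢ[𝕜] H) :
    ∃ y z : I → H, Orthonormal 𝕜 (Sum.elim y (g ∘ z)) ∧
      (∀ i ∈ S, ∀ j, inner 𝕜 (b i) (y j) = 0) ∧ ∀ i ∈ T, ∀ j, inner 𝕜 (b i) (z j) = 0 := by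
  have : Infinite I := hST.to_subtype.of_injective _ Subtype.val_injective
  have hb' : Orthonormal 𝕜 fun i : ↥(S ∪ T)ᶜ => b i := hb.comp _ Subtype.val_injective
  have hmem : ∀ {R : Set I}, R ⊆ S ∪ T → ∀ i : ↥(S ∪ T)ᶜ, b i ∈ (Submodule.span 𝕜 (b '' R))ᗮ :=
    fun hR i => mem_orthogonal_span_iff.2 (Set.forall_mem_image.2 fun j hj =>
      hb.inner_eq_zero (ne_of_mem_of_not_mem (hR hj) i.2))
  have := hST.to_subtype
  obtain ⟨x, hx, hxV⟩ := exists_orthonormal_mem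
    (V := Sum.elim (fun _ : I => (Submodule.span 𝕜 (b '' S))ᗮ)
      fun _ : I => (Submodule.span 𝕜 (b '' T))ᗮ.map (g.toLinearEquiv : H →ₗ[𝕜] H)) <| by
    rintro (- | -)
    · exact not_finiteDimensional_of_orthonormal_mem hb' (hmem Set.subset_union_left)
    · exact not_finiteDimensional_of_orthonormal_mem (hb'.comp_linearIsometryEquiv g) fun i =>
        Submodule.mem_map_of_mem (hmem Set.subset_union_right i)
  choose z hz hgz using fun i => hxV (Sum.inr i)
  have hxz : x = Sum.elim (x ∘ Sum.inl) (g ∘ z) := by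
    rw [← Sum.elim_comp_inl_inr x]
    exact congr_arg _ (funext fun i => (hgz i).symm)
  exact ⟨x ∘ Sum.inl, z, hxz ▸ hx, fun i hi j =>
    mem_orthogonal_span_iff.1 (hxV (Sum.inl j)) _ (Set.mem_image_of_mem b hi),
    fun i hi j => mem_orthogonal_span_iff.1 (hz j) _ (Set.mem_image_of_mem b hi)⟩

variable [CompleteSpace H] [TopologicalSpace.SeparableSpace H]

-- `k`, `a`, `d` straighten families spanning new directions: `k` and `a` agree on the part of `y`
-- indexed by `T \ S`, while `a * g` and `d` agree on the part of `z` indexed by `S \ T`. Hence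
-- `g = k⁻¹ * (k * a⁻¹) * (a * g * d⁻¹) * d` has its factors alternately in the two fixators.
theorem fixator_inter_subset {b : I → H} (hb : Orthonormal 𝕜 b) {S T : Set I}
    (hST : (S ∪ T)ᶜ.Infinite) :
    (fixator 𝕜 (b '' (S ∩ T)) : Set (H ≃ₗᵢ[𝕜] H)) ⊆
      fixator 𝕜 (b '' S) * fixator 𝕜 (b '' T) * fixator 𝕜 (b '' S) * fixator 𝕜 (b '' T) := by
  classical
  intro g hg
  have : Countable I := countable_of_orthonormal hb
  obtain ⟨y, z, hyz, hy, hz⟩ := exists_orthonormal_orthogonal hb hST g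
  let e : I → H := fun i => if i ∈ S then g (z i) else y i
  have he : Orthonormal 𝕜 e := by
    convert hyz.comp (fun i => if i ∈ S then Sum.inr i else Sum.inl i)
      (fun i j hij => by grind) using 2 with i
    grind
  have hz' : Orthonormal 𝕜 z := by
    simpa [Function.comp_def] using
      (hyz.comp _ Sum.inr_injective).comp_linearIsometryEquiv g.symm
  obtain ⟨k, hk, hky⟩ := exists_mem_fixator_apply_eq hb (hyz.comp _ Sum.inl_injective)
    Set.subset_union_left hST fun i hi j _ => hy i hi j
  obtain ⟨d, hd, hdz⟩ := exists_mem_fixator_apply_eq hb hz' Set.subset_union_right hST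
    fun i hi j _ => hz i hi j
  obtain ⟨a, ha, hae⟩ := exists_mem_fixator_apply_eq hb he
    (Set.inter_subset_left.trans Set.subset_union_left) hST fun i hi j _ => by
      by_cases hj : j ∈ S
      · simpa [e, hj, inner_apply_of_mem_fixator hg (Set.mem_image_of_mem b hi)] using hz i hi.2 j
      · simpa [e, hj] using hy i hi.1 j
  have hcancel : ∀ {u v : H ≃ₗᵢ[𝕜] H} {x x' : H}, u x = x' → v x = x' → (u * v⁻¹) x' = x' := by
    rintro u v x - hu rfl
    simpa using hu
  have hc : k * a⁻¹ ∈ fixator 𝕜 (b '' T) := mem_fixator_basis_image.2 fun i hi => by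
    by_cases hiS : i ∈ S
    · exact hcancel (hk _ ⟨i, hiS, rfl⟩) (ha _ ⟨i, ⟨hiS, hi⟩, rfl⟩)
    · exact hcancel (hky i ⟨.inr hi, hiS⟩)
        (by simpa [e, hiS] using hae i ⟨.inr hi, fun h => hiS h.1⟩)
  have hm : a * g * d⁻¹ ∈ fixator 𝕜 (b '' S) := mem_fixator_basis_image.2 fun i hi => by
    by_cases hiT : i ∈ T
    · exact hcancel (mul_mem ha hg _ ⟨i, ⟨hi, hiT⟩, rfl⟩) (hd _ ⟨i, hiT, rfl⟩)
    · exact hcancel (by simpa [e, hi] using hae i ⟨.inl hi, fun h => hiT h.2⟩)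
        (hdz i ⟨.inl hi, hiT⟩)
  exact ⟨_, ⟨_, ⟨k⁻¹, inv_mem hk, _, hc, rfl⟩, _, hm, rfl⟩, d, hd, by simp [mul_assoc]⟩

end Factorization

section AlmostDisjoint

theorem infinite_floorGraph (x : ℝ) : (Set.range fun n : ℕ => (n, ⌊n * x⌋)).Infinite :=
  Set.infinite_range_of_injective fun _ _ h => congr_arg Prod.fst h

theorem finite_floorGraph_inter {x y : ℝ} (hxy : x ≠ y) :
    ((Set.range fun n : ℕ => (n, ⌊n * x⌋)) ∩ Set.range fun n : ℕ => (n, ⌊n * y⌋)).Finite := by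
  obtain ⟨N, hN⟩ := exists_nat_ge |x - y|⁻¹
  refine ((Set.finite_Iic N).image fun n : ℕ => (n, ⌊n * x⌋)).subset ?_
  rintro _ ⟨⟨n, rfl⟩, m, h⟩
  obtain ⟨rfl, hfloor⟩ := Prod.ext_iff.1 h
  refine ⟨m, ?_, rfl⟩
  have hlt : m * |x - y| < 1 := by
    rw [← Nat.abs_cast, ← abs_mul, mul_sub]
    exact Int.abs_sub_lt_one_of_floor_eq_floor hfloor.symm
  have hmN : (m : ℝ) ≤ N := by
    refine le_trans ?_ hN
    rw [← one_div, le_div_iff₀ (abs_sub_pos.2 hxy)]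
    exact hlt.le
  exact_mod_cast hmN

theorem exists_almostDisjoint_family (I : Type*) [Countable I] [Infinite I] :
    ∃ A : ℝ → Set I, (∀ x, (A x).Infinite) ∧ Pairwise fun x y => (A x ∩ A y).Finite := by
  obtain ⟨φ⟩ := nonempty_equiv_of_countable (α := ℕ × ℤ) (β := I)
  refine ⟨fun x => φ '' Set.range fun n : ℕ => (n, ⌊n * x⌋), fun x => ?_, fun x y hxy => ?_⟩
  · exact (infinite_floorGraph x).image φ.injective.injOn
  · change (_ '' _ ∩ _ '' _).Finite
    rw [← Set.image_inter φ.injective]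
    exact (finite_floorGraph_inter hxy).image φ

theorem infinite_compl_union_of_almostDisjoint {I : Type*} {A : ℝ → Set I}
    (hA : ∀ x, (A x).Infinite) (hAA : Pairwise fun x y => (A x ∩ A y).Finite) (x y : ℝ) :
    (A x ∪ A y)ᶜ.Infinite := by
  obtain ⟨z, hz⟩ := exists_gt (max x y)
  rw [max_lt_iff] at hz
  refine ((hA z).sdiff ((hAA hz.1.ne).union (hAA hz.2.ne))).mono fun i hi => ?_
  grind

theorem exists_perm_image_eq {I : Type*} [Countable I] {S T : Set I} (hS : S.Infinite)
    (hSc : Sᶜ.Infinite) (hT : T.Infinite) (hTc : Tᶜ.Infinite) :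
    ∃ σ : Equiv.Perm I, σ '' S = T := by
  classical
  have := hS.to_subtype
  have := hT.to_subtype
  have : Infinite {i // i ∉ S} := hSc.to_subtype
  have : Infinite {i // i ∉ T} := hTc.to_subtype
  obtain ⟨e⟩ := nonempty_equiv_of_countable (α := {i // i ∈ S}) (β := {i // i ∈ T})
  obtain ⟨f⟩ := nonempty_equiv_of_countable (α := {i // i ∉ S}) (β := {i // i ∉ T})
  refine ⟨Equiv.subtypeCongr e f, ?_⟩
  refine (Equiv.eq_preimage_iff_image_eq _ _ _).1 (Set.ext fun i => ?_)
  by_cases hi : i ∈ S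
  · simp [Equiv.subtypeCongr, hi]
  · simpa [Equiv.subtypeCongr, hi] using (f ⟨i, hi⟩).2

variable {𝕜 H I : Type*} [RCLike 𝕜] [NormedAddCommGroup H] [InnerProductSpace 𝕜 H]
  [CompleteSpace H] {W : Set (H ≃ₗᵢ[𝕜] H)}

theorem CountablySyndetic.exists_permOperator_mem_sq [Countable I] (hsynd : CountablySyndetic W)
    (hsym : W⁻¹ = W) (b : HilbertBasis I 𝕜 H) {S : Set I} (hS : S.Infinite)
    (hSc : Sᶜ.Infinite) :
    ∃ τ : Equiv.Perm I, permOperator b τ ∈ W ^ 2 ∧ (S ∩ τ '' S).Finite ∧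
      (S ∪ τ '' S)ᶜ.Infinite := by
  have := hS.to_subtype
  have : Infinite I := .of_injective _ (Subtype.val_injective (p := (· ∈ S)))
  obtain ⟨A, hA, hAA⟩ := exists_almostDisjoint_family I
  have hAc := infinite_compl_union_of_almostDisjoint hA hAA
  choose σ hσ using fun x =>
    exists_perm_image_eq hS hSc (hA x) (Set.union_self (A x) ▸ hAc x x)
  obtain ⟨x, y, hxy, hw⟩ :=
    hsynd.exists_lt_inv_mul_mem_sq hsym fun x : ℝ => permOperator b (σ x)
  have hSx : ⇑(σ x)⁻¹ '' A x = S := by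
    rw [← hσ x, ← Set.image_comp]
    simp
  have hSy : ⇑((σ x)⁻¹ * σ y) '' S = ⇑(σ x)⁻¹ '' A y := by
    rw [Equiv.Perm.coe_mul, Set.image_comp, hσ y]
  refine ⟨(σ x)⁻¹ * σ y, by rwa [map_mul, map_inv], ?_, ?_⟩ <;> rw [hSy]
  · nth_rw 1 [← hSx]
    rw [← Set.image_inter (Equiv.injective _)]
    exact (hAA hxy.ne).image _
  · nth_rw 1 [← hSx]
    rw [← Set.image_union, ← Set.image_compl_eq (Equiv.bijective _)]
    exact (hAc x y).image (Equiv.injective _).injOn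

theorem CountablySyndetic.exists_finite_fixator_subset_pow [TopologicalSpace.SeparableSpace H]
    (hsynd : CountablySyndetic W) (hsym : W⁻¹ = W) (b : HilbertBasis I 𝕜 H) {S : Set I}
    (hS : S.Infinite) (hSc : Sᶜ.Infinite) {N : ℕ}
    (hSW : (fixator 𝕜 (b '' S) : Set (H ≃ₗᵢ[𝕜] H)) ⊆ W ^ N) :
    ∃ F : Set I, F.Finite ∧ (fixator 𝕜 (b '' F) : Set (H ≃ₗᵢ[𝕜] H)) ⊆
      W ^ (N + (2 + N + 2) + N + (2 + N + 2)) := by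
  have : Countable I := countable_of_orthonormal b.orthonormal
  obtain ⟨τ, hτ, hfin, hinf⟩ := hsynd.exists_permOperator_mem_sq hsym b hS hSc
  have hτW := fixator_image_subset_pow hsym hSW hτ
  rw [permOperator_image] at hτW
  refine ⟨S ∩ τ '' S, hfin, (fixator_inter_subset b.orthonormal hinf).trans ?_⟩
  simp only [pow_add W] at hτW ⊢
  exact Set.mul_subset_mul (Set.mul_subset_mul (Set.mul_subset_mul hSW hτW) hSW) hτW

theorem CountablySyndetic.exists_orthonormal_fixator_subset_pow_forty
    [TopologicalSpace.SeparableSpace H] (hH : ¬ FiniteDimensional 𝕜 H)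
    (hsynd : CountablySyndetic W) (hsym : W⁻¹ = W) :
    ∃ (n : ℕ) (f : Fin n → H), Orthonormal 𝕜 f ∧
      (fixator 𝕜 (Set.range f) : Set (H ≃ₗᵢ[𝕜] H)) ⊆ W ^ 40 := by
  obtain ⟨b⟩ := nonempty_hilbertBasis (J := (ℕ × ℚ) × ℤ × ℕ) hH
  obtain ⟨S, hS, hSc, hSW⟩ := hsynd.exists_fixator_subset_pow_eight hsym b
  obtain ⟨F, hF, hFW⟩ := hsynd.exists_finite_fixator_subset_pow hsym b hS hSc hSW
  have := hF.to_subtype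
  obtain ⟨n, ⟨φ⟩⟩ := Finite.exists_equiv_fin F
  refine ⟨n, fun k => b (φ.symm k), b.orthonormal.comp _
    (Subtype.val_injective.comp φ.symm.injective), ?_⟩
  rwa [Set.range_comp' b, Set.range_comp' Subtype.val, φ.symm.range_eq_univ, Set.image_univ,
    Subtype.range_coe]

end AlmostDisjoint

section FiniteFrames

variable {𝕜 H K L : Type*} [RCLike 𝕜] [NormedAddCommGroup H] [InnerProductSpace 𝕜 H]

open ComplexConjugate in
theorem exists_isometryEquiv_apply_eq_of_norm_eq {u v : H} (huv : ‖u‖ = ‖v‖) :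
    ∃ T : H ≃ₗᵢ[𝕜] H, T u = v ∧ ∀ z, inner 𝕜 (u - v) z = 0 → T z = z := by
  set d := u - v with hd
  set a := inner 𝕜 d u with ha
  have hdd : inner 𝕜 d d = a + conj a := by
    have hsq : inner 𝕜 u u = inner 𝕜 v v := by
      rw [inner_self_eq_norm_sq_to_K, inner_self_eq_norm_sq_to_K, huv]
    simp only [ha, hd, map_sub, inner_conj_symm, inner_sub_left, inner_sub_right, hsq]
    ring
  rcases eq_or_ne a 0 with h0 | h0
  · have hd0 : u - v = 0 := by
      rw [← inner_self_eq_zero (𝕜 := 𝕜), ← hd, hdd, h0, map_zero, add_zero]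
    exact ⟨1, sub_eq_zero.1 hd0, fun _ _ => rfl⟩
  have h0' : conj a ≠ 0 := (map_ne_zero _).2 h0
  -- The reflection `x ↦ x - 2 ⟪d, x⟫ / ⟪d, d⟫ d` need not map `u` to `v` over `ℂ`; replacing
  -- `⟪d, d⟫ / 2` by `⟪d, u⟫` corrects this and keeps the map isometric.
  let T : H →ₗ[𝕜] H := .id - (a⁻¹ • (innerₛₗ 𝕜 d)).smulRight d
  have hT : ∀ x, T x = x - (a⁻¹ * inner 𝕜 d x) • d := fun x => rfl
  have hTinner : ∀ x y, inner 𝕜 (T x) (T y) = inner 𝕜 x y := fun x y => by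
    simp only [hT, inner_sub_left, inner_sub_right, inner_smul_left, inner_smul_right, hdd,
      map_mul, map_inv₀, inner_conj_symm]
    field_simp
    ring
  have hTsurj : Function.Surjective (T.isometryOfInner hTinner) := fun x => by
    refine ⟨x - ((conj a)⁻¹ * inner 𝕜 d x) • d, ?_⟩
    rw [LinearMap.coe_isometryOfInner, hT, inner_sub_right, inner_smul_right, hdd, sub_sub,
      ← add_smul, sub_eq_self, smul_eq_zero]
    left
    field_simp
    ring
  refine ⟨.ofSurjective _ hTsurj, ?_, fun z hz => ?_⟩ <;>
    rw [LinearIsometryEquiv.coe_ofSurjective, LinearMap.coe_isometryOfInner, hT]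
  · rw [← ha, inv_mul_cancel₀ h0, one_smul, hd, sub_sub_cancel]
  · rw [hz, mul_zero, zero_smul, sub_zero]

theorem exists_isometryEquiv_of_inner_eq [Finite K] {x y : K → H}
    (hxy : ∀ i j, inner 𝕜 (x i) (x j) = inner 𝕜 (y i) (y j)) :
    ∃ u : H ≃ₗᵢ[𝕜] H, ∀ i, u (x i) = y i := by
  classical
  have := Fintype.ofFinite K
  suffices h : ∀ s : Finset K, ∃ u : H ≃ₗᵢ[𝕜] H, ∀ i ∈ s, u (x i) = y i by
    obtain ⟨u, hu⟩ := h Finset.univ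
    exact ⟨u, fun i => hu i (Finset.mem_univ i)⟩
  intro s
  induction s using Finset.induction_on with
  | empty => exact ⟨1, by simp⟩
  | insert k s hk ih =>
    obtain ⟨u, hu⟩ := ih
    have hnorm : ‖u (x k)‖ = ‖y k‖ := by
      rw [u.norm_map, norm_eq_sqrt_re_inner (𝕜 := 𝕜), hxy, ← norm_eq_sqrt_re_inner]
    obtain ⟨T, hTk, hT⟩ := exists_isometryEquiv_apply_eq_of_norm_eq (𝕜 := 𝕜) hnorm
    refine ⟨T * u, fun i hi => ?_⟩
    rw [LinearIsometryEquiv.coe_mul, Function.comp_apply]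
    rcases Finset.mem_insert.1 hi with rfl | hi
    · exact hTk
    · rw [hu i hi]
      refine hT _ ?_
      rw [inner_sub_left, ← hxy, ← hu i hi, LinearIsometryEquiv.inner_map_map, sub_self]

theorem exists_mem_fixator_of_inner_eq [Finite K] [Finite L] {f : L → H} {x y : K → H}
    (hxy : ∀ i j, inner 𝕜 (x i) (x j) = inner 𝕜 (y i) (y j))
    (hf : ∀ l i, inner 𝕜 (f l) (x i) = inner 𝕜 (f l) (y i)) :
    ∃ u ∈ fixator 𝕜 (Set.range f), ∀ i, u (x i) = y i := by
  obtain ⟨u, hu⟩ := exists_isometryEquiv_of_inner_eq (𝕜 := 𝕜) (x := Sum.elim f x)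
    (y := Sum.elim f y) <| by
      rintro (l | i) (m | j)
      · rfl
      · exact hf l j
      · simpa only [Sum.elim_inl, Sum.elim_inr, inner_conj_symm] using
          congr_arg (starRingEnd 𝕜) (hf m i)
      · exact hxy i j
  exact ⟨u, Set.forall_mem_range.2 fun l => hu (Sum.inl l), fun i => hu (Sum.inr i)⟩

theorem mem_mul_fixator_of_inner_eq [Finite K] {f p x : K → H} {g : H ≃ₗᵢ[𝕜] H}
    (hxx : ∀ i j, inner 𝕜 (x i) (x j) = inner 𝕜 (f i) (f j))
    (hpx : ∀ i j, inner 𝕜 (p i) (x j) = inner 𝕜 (p i) (f j))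
    (hfx : ∀ i j, inner 𝕜 (f i) (x j) = inner 𝕜 (f i) (g (f j))) :
    g ∈ (fixator 𝕜 (Set.range f) * fixator 𝕜 (Set.range p) * fixator 𝕜 (Set.range f) :
      Set (H ≃ₗᵢ[𝕜] H)) := by
  obtain ⟨u, hu, huf⟩ :=
    exists_mem_fixator_of_inner_eq (fun i j => (hxx i j).symm) fun i j => (hpx i j).symm
  obtain ⟨v, hv, hvx⟩ := exists_mem_fixator_of_inner_eq (y := fun i => g (f i))
    (fun i j => (hxx i j).trans (g.inner_map_map _ _).symm) hfx
  have hg : (v * u)⁻¹ * g ∈ fixator 𝕜 (Set.range f) := Set.forall_mem_range.2 fun i => by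
    rw [inv_mul_apply_eq_iff, LinearIsometryEquiv.coe_mul, Function.comp_apply, huf, hvx]
  exact ⟨_, ⟨v, hv, u, hu, rfl⟩, _, hg, mul_inv_cancel_left _ _⟩

open scoped ComplexOrder in
theorem posSemidef_one_sub_gram [Fintype K] [DecidableEq K] {x : K → H}
    (hx : ∑ i, ‖x i‖ ^ 2 ≤ 1) : (1 - Matrix.gram 𝕜 x).PosSemidef := by
  refine .of_dotProduct_mulVec_nonneg (Matrix.isHermitian_one.sub (Matrix.isHermitian_gram 𝕜 x))
    fun a => ?_
  have hle : ‖∑ i, a i • x i‖ ^ 2 ≤ ∑ i, ‖a i‖ ^ 2 := calc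
    ‖∑ i, a i • x i‖ ^ 2 ≤ (∑ i, ‖a i‖ * ‖x i‖) ^ 2 := by
      gcongr
      exact (norm_sum_le _ _).trans_eq (Finset.sum_congr rfl fun i _ => norm_smul _ _)
    _ ≤ (∑ i, ‖a i‖ ^ 2) * ∑ i, ‖x i‖ ^ 2 := Finset.sum_mul_sq_le_sq_mul_sq _ _ _
    _ ≤ ∑ i, ‖a i‖ ^ 2 := mul_le_of_le_one_right (by positivity) hx
  have hone : star a ⬝ᵥ a = ((∑ i, ‖a i‖ ^ 2 : ℝ) : 𝕜) := by
    simp [dotProduct, RCLike.conj_mul]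
  rw [Matrix.sub_mulVec, dotProduct_sub, Matrix.one_mulVec, Matrix.star_dotProduct_gram_mulVec,
    inner_self_eq_norm_sq_to_K, hone, sub_nonneg]
  exact_mod_cast hle

open scoped ComplexOrder MatrixOrder in
theorem exists_gram_eq [Finite K] {A : Matrix K K 𝕜} (hA : A.PosSemidef)
    {e : K → H} (he : Orthonormal 𝕜 e) :
    ∃ s : K → H, Matrix.gram 𝕜 s = A ∧ ∀ i, s i ∈ Submodule.span 𝕜 (Set.range e) := by
  classical
  have := Fintype.ofFinite K
  obtain ⟨B, rfl⟩ := CStarAlgebra.nonneg_iff_eq_star_mul_self.1 hA.nonneg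
  refine ⟨fun i => ∑ m, B m i • e m, ?_, fun i => ?_⟩
  · ext i j
    simp [Matrix.gram_apply, Matrix.mul_apply, he.inner_sum]
  · exact sum_mem fun m _ => Submodule.smul_mem _ _ (Submodule.subset_span ⟨m, rfl⟩)

theorem not_finiteDimensional_orthogonal_span (hH : ¬ FiniteDimensional 𝕜 H) {t : Set H}
    (ht : t.Finite) : ¬ FiniteDimensional 𝕜 (Submodule.span 𝕜 t)ᗮ := fun _ => by
  have := FiniteDimensional.span_of_finite 𝕜 ht
  have htop : Submodule.span 𝕜 t ⊔ (Submodule.span 𝕜 t)ᗮ = ⊤ :=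
    Submodule.sup_orthogonal_of_hasOrthogonalProjection
  exact hH (Module.finite_def.2 (htop ▸ (Submodule.fg_iff_finiteDimensional _).2 inferInstance))

theorem exists_orthonormal_orthogonal_of_finite [Finite K] (hH : ¬ FiniteDimensional 𝕜 H)
    {t : Set H} (ht : t.Finite) :
    ∃ e : K → H, Orthonormal 𝕜 e ∧ ∀ v ∈ t, ∀ i, inner 𝕜 v (e i) = 0 := by
  obtain ⟨ι, hι⟩ := Countable.exists_injective_nat K
  obtain ⟨e, he, het⟩ := exists_orthonormal_nat_mem fun _ =>
    not_finiteDimensional_orthogonal_span hH ht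
  exact ⟨e ∘ ι, he.comp ι hι, fun v hv i => mem_orthogonal_span_iff.1 (het (ι i)) v hv⟩

theorem exists_orthonormal_inner_eq [Fintype K] (hH : ¬ FiniteDimensional 𝕜 H) {t : Set H}
    (ht : t.Finite) {ρ : K → H} (hρ : ∑ i, ‖ρ i‖ ^ 2 ≤ 1) :
    ∃ q : K → H, Orthonormal 𝕜 q ∧ ∀ v ∈ t, ∀ i, inner 𝕜 v (q i) = inner 𝕜 v (ρ i) := by
  classical
  obtain ⟨e, he, het⟩ := exists_orthonormal_orthogonal_of_finite (𝕜 := 𝕜) (K := K) hH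
    (ht.union (Set.finite_range ρ))
  obtain ⟨s, hs, hse⟩ := exists_gram_eq (posSemidef_one_sub_gram hρ) he
  have hst : ∀ v ∈ t ∪ Set.range ρ, ∀ i, inner 𝕜 v (s i) = 0 := fun v hv i => by
    have hve : v ∈ (Submodule.span 𝕜 (Set.range e))ᗮ :=
      mem_orthogonal_span_iff.2 (Set.forall_mem_range.2 fun j =>
        inner_eq_zero_symm.1 (het v hv j))
    exact inner_eq_zero_symm.1 (hve _ (hse i))
  have hρs : ∀ i j, inner 𝕜 (ρ i) (s j) = 0 := fun i => hst _ (.inr ⟨i, rfl⟩)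
  refine ⟨ρ + s, Matrix.gram_eq_one_iff_orthonormal.1 ?_, fun v hv i => ?_⟩
  · rw [← add_sub_cancel (Matrix.gram 𝕜 ρ) 1, ← hs]
    ext i j
    simp [Matrix.gram_apply, inner_add_left, inner_add_right, hρs,
      inner_eq_zero_symm.1 (hρs j i)]
  · rw [Pi.add_apply, inner_add_right, hst v (.inl hv), add_zero]

theorem orthonormal_rotation {p q : K → H} (hpq : Orthonormal 𝕜 (Sum.elim p q)) {c σ : ℝ}
    (hc : c ^ 2 + σ ^ 2 = 1) :
    Orthonormal 𝕜 (Sum.elim (fun i => (c : 𝕜) • p i + (σ : 𝕜) • q i)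
      fun i => (σ : 𝕜) • p i - (c : 𝕜) • q i) := by
  classical
  have hc' : (c : 𝕜) ^ 2 + (σ : 𝕜) ^ 2 = 1 := by exact_mod_cast hc
  have hinner := orthonormal_iff_ite.1 hpq
  simp only [Sum.forall, Sum.elim_inl, Sum.elim_inr, Sum.inl.injEq, Sum.inr.injEq, reduceCtorEq,
    if_false] at hinner
  rw [orthonormal_iff_ite]
  simp only [Sum.forall, Sum.elim_inl, Sum.elim_inr, Sum.inl.injEq, Sum.inr.injEq, reduceCtorEq,
    if_false, inner_add_left, inner_add_right, inner_sub_left, inner_sub_right, inner_smul_left,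
    inner_smul_right, hinner, RCLike.conj_ofReal]
  grind

end FiniteFrames

section OpenSets

variable {𝕜 H K : Type*} [RCLike 𝕜] [NormedAddCommGroup H] [InnerProductSpace 𝕜 H]

theorem inner_eq_of_orthonormal {x y : K → H} (hx : Orthonormal 𝕜 x) (hy : Orthonormal 𝕜 y)
    (i j : K) : inner 𝕜 (x i) (x j) = inner 𝕜 (y i) (y j) := by
  classical
  rw [orthonormal_iff_ite.1 hx, orthonormal_iff_ite.1 hy]

theorem exists_orthonormal_inner_eq_rotation [Fintype K] (hH : ¬ FiniteDimensional 𝕜 H)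
    {p ρ : K → H} (hp : Orthonormal 𝕜 p) (hpρ : ∀ i j, inner 𝕜 (p i) (ρ j) = 0)
    (hρ : ∑ i, ‖ρ i‖ ^ 2 ≤ 1) {c σ : ℝ} (hc : c ^ 2 + σ ^ 2 = 1) {t : Set H} (ht : t.Finite) :
    ∃ x : K → H, Orthonormal 𝕜 x ∧
      ∀ v ∈ t, ∀ i, inner 𝕜 v (x i) = c * inner 𝕜 v (p i) + σ * inner 𝕜 v (ρ i) := by
  obtain ⟨q, hq, hqt⟩ :=
    exists_orthonormal_inner_eq (𝕜 := 𝕜) hH (ht.union (Set.finite_range p)) hρ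
  have hpq := orthonormal_sumElim hp hq fun i j => (hqt _ (.inr ⟨i, rfl⟩) j).trans (hpρ i j)
  refine ⟨_, (orthonormal_rotation hpq hc).comp Sum.inl Sum.inl_injective, fun v hv i => ?_⟩
  simp only [Function.comp_apply, Sum.elim_inl, inner_add_right, inner_smul_right,
    hqt v (.inl hv)]

theorem norm_sum_smul_sq_of_orthonormal [Fintype K] {e : K → H} (he : Orthonormal 𝕜 e)
    (a : K → 𝕜) : ‖∑ i, a i • e i‖ ^ 2 = ∑ i, ‖a i‖ ^ 2 := by
  have h := he.inner_sum a a Finset.univ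
  simp only [inner_self_eq_norm_sq_to_K, RCLike.conj_mul] at h
  exact_mod_cast h

theorem exists_orthogonal_rotation_inner_eq [Fintype K] {f y : K → H}
    (hfy : Orthonormal 𝕜 (Sum.elim f y)) {c σ : ℝ} (hc : c ^ 2 + σ ^ 2 = 1) (hσ : σ ≠ 0)
    {B : K → K → 𝕜} (hB : ∑ j, ∑ i, ‖B i j‖ ^ 2 ≤ σ ^ 4) :
    ∃ ρ : K → H, (∀ i j, inner 𝕜 ((c : 𝕜) • f i + (σ : 𝕜) • y i) (ρ j) = 0) ∧
      (∀ i j, σ * inner 𝕜 (f i) (ρ j) = B i j) ∧ ∑ j, ‖ρ j‖ ^ 2 ≤ 1 := by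
  classical
  have hpr := orthonormal_rotation hfy hc
  set r := fun i => (σ : 𝕜) • f i - (c : 𝕜) • y i with hr_def
  have hr : Orthonormal 𝕜 r := hpr.comp Sum.inr Sum.inr_injective
  have hpr0 (i j) : inner 𝕜 ((c : 𝕜) • f i + (σ : 𝕜) • y i) (r j) = 0 :=
    hpr.inner_eq_zero (i := Sum.inl i) (j := Sum.inr j) Sum.inl_ne_inr
  have hfr (i j) : inner 𝕜 (f i) (r j) = if i = j then (σ : 𝕜) else 0 := by
    have hff := orthonormal_iff_ite.1 (hfy.comp Sum.inl Sum.inl_injective) i j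
    have hfy0 : inner 𝕜 (f i) (y j) = 0 :=
      hfy.inner_eq_zero (i := Sum.inl i) (j := Sum.inr j) Sum.inl_ne_inr
    simp only [Function.comp_apply, Sum.elim_inl] at hff
    simp only [hr_def, inner_sub_right, inner_smul_right, hff, hfy0, mul_ite, mul_one, mul_zero,
      sub_zero]
  have hσ' : (σ : 𝕜) ≠ 0 := RCLike.ofReal_ne_zero.2 hσ
  refine ⟨fun j => ∑ m, (((σ : 𝕜) ^ 2)⁻¹ * B m j) • r m, fun i j => ?_, fun i j => ?_, ?_⟩
  · simp only [inner_sum, inner_smul_right, hpr0, mul_zero, Finset.sum_const_zero]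
  · simp only [inner_sum, inner_smul_right, hfr, mul_ite, mul_zero, Finset.sum_ite_eq,
      Finset.mem_univ, if_true]
    field_simp
  · have hscale (m j) : ‖((σ : 𝕜) ^ 2)⁻¹ * B m j‖ ^ 2 = (σ ^ 4)⁻¹ * ‖B m j‖ ^ 2 := by
      rw [norm_mul, norm_inv, norm_pow, RCLike.norm_ofReal, sq_abs]
      ring
    simp only [norm_sum_smul_sq_of_orthonormal hr, hscale, ← Finset.mul_sum]
    exact inv_mul_le_one_of_le₀ hB (by positivity)

theorem exists_orthonormal_inner_eq_of_sum_le [Fintype K] (hH : ¬ FiniteDimensional 𝕜 H)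
    {f y : K → H} (hfy : Orthonormal 𝕜 (Sum.elim f y)) {c σ : ℝ} (hc : c ^ 2 + σ ^ 2 = 1)
    (hσ : σ ≠ 0) {A : K → K → 𝕜}
    (hA : ∑ j, ∑ i, ‖A i j - c ^ 2 * inner 𝕜 (f i) (f j)‖ ^ 2 ≤ σ ^ 4) :
    ∃ x : K → H, Orthonormal 𝕜 x ∧ (∀ i j, inner 𝕜 (f i) (x j) = A i j) ∧
      ∀ i j, inner 𝕜 ((c : 𝕜) • f i + (σ : 𝕜) • y i) (x j) =
        inner 𝕜 ((c : 𝕜) • f i + (σ : 𝕜) • y i) (f j) := by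
  obtain ⟨ρ, hpρ, hfρ, hρ⟩ := exists_orthogonal_rotation_inner_eq hfy hc hσ hA
  set p := fun i => (c : 𝕜) • f i + (σ : 𝕜) • y i with hp_def
  have hf : Orthonormal 𝕜 f := hfy.comp Sum.inl Sum.inl_injective
  have hp : Orthonormal 𝕜 p := (orthonormal_rotation hfy hc).comp Sum.inl Sum.inl_injective
  have hfp (i j) : inner 𝕜 (f i) (p j) = c * inner 𝕜 (f i) (f j) := by
    have hfy0 : inner 𝕜 (f i) (y j) = 0 :=
      hfy.inner_eq_zero (i := Sum.inl i) (j := Sum.inr j) Sum.inl_ne_inr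
    simp only [hp_def, inner_add_right, inner_smul_right, hfy0, mul_zero, add_zero]
  have hpf (i j) : inner 𝕜 (p i) (f j) = c * inner 𝕜 (p i) (p j) := by
    rw [← inner_conj_symm, hfp, map_mul, inner_conj_symm, RCLike.conj_ofReal,
      inner_eq_of_orthonormal hf hp]
  obtain ⟨x, hx, hxt⟩ := exists_orthonormal_inner_eq_rotation hH hp hpρ hρ hc
    ((Set.finite_range f).union (Set.finite_range p))
  refine ⟨x, hx, fun i j => ?_, fun i j => ?_⟩
  · rw [hxt _ (.inl ⟨i, rfl⟩), hfp, hfρ]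
    ring
  · rw [hxt _ (.inr ⟨i, rfl⟩), hpρ, mul_zero, add_zero]
    exact (hpf i j).symm

theorem mem_mul_fixator_of_sum_norm_sq_le [Fintype K] (hH : ¬ FiniteDimensional 𝕜 H)
    {f y : K → H} (hfy : Orthonormal 𝕜 (Sum.elim f y)) {c σ : ℝ} (hc : c ^ 2 + σ ^ 2 = 1)
    (hσ : σ ≠ 0) {g : H ≃ₗᵢ[𝕜] H}
    (hg : ∑ j, ∑ i, ‖inner 𝕜 (f i) (g (f j)) - c ^ 2 * inner 𝕜 (f i) (f j)‖ ^ 2 ≤ σ ^ 4) :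
    g ∈ (fixator 𝕜 (Set.range f) *
      fixator 𝕜 (Set.range fun i => (c : 𝕜) • f i + (σ : 𝕜) • y i) *
      fixator 𝕜 (Set.range f) : Set (H ≃ₗᵢ[𝕜] H)) := by
  obtain ⟨x, hx, hfx, hpx⟩ := exists_orthonormal_inner_eq_of_sum_le hH hfy hc hσ
    (A := fun i j => inner 𝕜 (f i) (g (f j))) hg
  exact mem_mul_fixator_of_inner_eq
    (inner_eq_of_orthonormal hx (hfy.comp Sum.inl Sum.inl_injective)) hpx hfx

theorem isOpen_preimage_mul_right {U : Set (H ≃ₗᵢ[𝕜] H)}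
    (hU : IsOpen[strongOperatorTopology 𝕜 H] U) (k : H ≃ₗᵢ[𝕜] H) :
    IsOpen[strongOperatorTopology 𝕜 H] ((· * k) ⁻¹' U) := by
  obtain ⟨O, hO, rfl⟩ := isOpen_induced_iff.1 hU
  exact isOpen_induced_iff.2 ⟨(fun φ x => φ (k x)) ⁻¹' O, hO.preimage (by fun_prop), rfl⟩

theorem exists_isOpen_subset_mul_fixator [Finite K] (hH : ¬ FiniteDimensional 𝕜 H)
    {f y : K → H} (hfy : Orthonormal 𝕜 (Sum.elim f y)) {c σ : ℝ} (hc : c ^ 2 + σ ^ 2 = 1)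
    (hσ : σ ≠ 0) :
    ∃ U : Set (H ≃ₗᵢ[𝕜] H), IsOpen[strongOperatorTopology 𝕜 H] U ∧ U.Nonempty ∧
      U ⊆ fixator 𝕜 (Set.range f) *
        fixator 𝕜 (Set.range fun i => (c : 𝕜) • f i + (σ : 𝕜) • y i) *
        fixator 𝕜 (Set.range f) := by
  have := Fintype.ofFinite K
  refine ⟨{g | ∑ j, ∑ i, ‖inner 𝕜 (f i) (g (f j)) - c ^ 2 * inner 𝕜 (f i) (f j)‖ ^ 2 < σ ^ 4},
    ?_, ?_, fun g hg => mem_mul_fixator_of_sum_norm_sq_le hH hfy hc hσ hg.le⟩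
  · refine isOpen_induced_iff.2 ⟨{φ : H → H |
      ∑ j, ∑ i, ‖inner 𝕜 (f i) (φ (f j)) - c ^ 2 * inner 𝕜 (f i) (f j)‖ ^ 2 < σ ^ 4}, ?_, rfl⟩
    refine isOpen_lt ?_ continuous_const
    fun_prop
  · obtain ⟨x, hx, hfx, -⟩ := exists_orthonormal_inner_eq_of_sum_le hH hfy hc hσ
      (A := fun i j => c ^ 2 * inner 𝕜 (f i) (f j)) (by simp [(show Even 4 by decide).pow_nonneg])
    obtain ⟨k, hk⟩ := exists_isometryEquiv_of_inner_eq
      (inner_eq_of_orthonormal (hfy.comp Sum.inl Sum.inl_injective) hx)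
    refine ⟨k, ?_⟩
    have hk' (j) : k (f j) = x j := hk j
    simpa [hk', hfx] using (show Even 4 by decide).pow_pos hσ

variable {W : Set (H ≃ₗᵢ[𝕜] H)}

theorem CountablySyndetic.exists_rotation_mem_sq (hsynd : CountablySyndetic W)
    (hsym : W⁻¹ = W) [Finite K] {f y : K → H} (hfy : Orthonormal 𝕜 (Sum.elim f y)) :
    ∃ w ∈ W ^ 2, ∃ c σ : ℝ, c ^ 2 + σ ^ 2 = 1 ∧ σ ≠ 0 ∧
      ∀ i, w (f i) = (c : 𝕜) • f i + (σ : 𝕜) • y i := by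
  -- Angles are taken in `(-π / 2, π / 2)` so that distinct ones differ by less than `π`.
  let R := fun t : ℝ => Sum.elim
    (fun i => (Real.cos (Real.arctan t) : 𝕜) • f i + (Real.sin (Real.arctan t) : 𝕜) • y i)
    fun i => (Real.sin (Real.arctan t) : 𝕜) • f i - (Real.cos (Real.arctan t) : 𝕜) • y i
  have hR (t : ℝ) : ∃ u : H ≃ₗᵢ[𝕜] H, ∀ k, u (Sum.elim f y k) = R t k :=
    exists_isometryEquiv_of_inner_eq <| inner_eq_of_orthonormal hfy <|
      orthonormal_rotation hfy (Real.cos_sq_add_sin_sq _)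
  choose h hh using hR
  obtain ⟨s, t, hst, hw⟩ := hsynd.exists_lt_inv_mul_mem_sq hsym h
  refine ⟨_, hw, Real.cos (Real.arctan s - Real.arctan t),
    Real.sin (Real.arctan s - Real.arctan t), Real.cos_sq_add_sin_sq _, ?_, fun i => ?_⟩
  · have hlt := Real.arctan_strictMono hst
    refine (Real.sin_neg_of_neg_of_neg_pi_lt (sub_neg.2 hlt) ?_).ne
    linarith [Real.neg_pi_div_two_lt_arctan s, Real.arctan_lt_pi_div_two t]
  · have hf := fun t => hh t (Sum.inl i)
    have hy := fun t => hh t (Sum.inr i)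
    simp only [Sum.elim_inl, Sum.elim_inr, R] at hf hy
    rw [inv_mul_apply_eq_iff, hf, map_add, map_smul, map_smul, hf, hy]
    set α := Real.arctan s
    set β := Real.arctan t
    have hcos : Real.cos β = Real.cos (α - β) * Real.cos α + Real.sin (α - β) * Real.sin α := by
      rw [← Real.cos_sub, sub_sub_cancel_left, Real.cos_neg]
    have hsin : Real.sin β = Real.cos (α - β) * Real.sin α - Real.sin (α - β) * Real.cos α := by
      rw [← neg_inj, ← Real.sin_neg, ← sub_sub_cancel_left α β, Real.sin_sub]
      ring
    rw [hcos, hsin]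
    push_cast
    module

theorem CountablySyndetic.exists_isOpen_subset_pow (hH : ¬ FiniteDimensional 𝕜 H)
    (hsynd : CountablySyndetic W) (hsym : W⁻¹ = W) [Finite K] {f : K → H}
    (hf : Orthonormal 𝕜 f) {N : ℕ}
    (hfW : (fixator 𝕜 (Set.range f) : Set (H ≃ₗᵢ[𝕜] H)) ⊆ W ^ N) :
    ∃ V : Set (H ≃ₗᵢ[𝕜] H), IsOpen[strongOperatorTopology 𝕜 H] V ∧ 1 ∈ V ∧
      V ⊆ W ^ ((N + (2 + N + 2) + N) + (N + (2 + N + 2) + N)) := by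
  obtain ⟨y, hy, hfy⟩ := exists_orthonormal_orthogonal_of_finite (𝕜 := 𝕜) (K := K) hH
    (Set.finite_range f)
  have hfy' := orthonormal_sumElim hf hy fun i => hfy _ (Set.mem_range_self i)
  obtain ⟨w, hw, c, σ, hc, hσ, hwf⟩ := hsynd.exists_rotation_mem_sq hsym hfy'
  obtain ⟨U, hU, ⟨k, hk⟩, hUf⟩ := exists_isOpen_subset_mul_fixator hH hfy' hc hσ
  have hUW : U ⊆ W ^ (N + (2 + N + 2) + N) := by
    have hwfW := fixator_image_subset_pow hsym hfW hw
    rw [← Set.range_comp'] at hwfW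
    simp only [hwf, pow_add W] at hwfW hfW ⊢
    exact hUf.trans (Set.mul_subset_mul (Set.mul_subset_mul hfW hwfW) hfW)
  refine ⟨_, isOpen_preimage_mul_right hU k, by simpa using hk, fun g hg => ?_⟩
  simpa using mul_mem_pow_add (hUW hg) (inv_mem_pow hsym (hUW hk))

end OpenSets

theorem steinhaus_orthogonalGroup_general {𝕜 H : Type*} [RCLike 𝕜] [NormedAddCommGroup H]
    [InnerProductSpace 𝕜 H] [CompleteSpace H] [TopologicalSpace.SeparableSpace H]
    (hinf : ¬ FiniteDimensional 𝕜 H) {W : Set (H ≃ₗᵢ[𝕜] H)} (hsym : W⁻¹ = W)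
    (hsynd : CountablySyndetic W) :
    ∃ V : Set (H ≃ₗᵢ[𝕜] H),
      IsOpen[strongOperatorTopology 𝕜 H] V ∧ (1 : (H ≃ₗᵢ[𝕜] H)) ∈ V ∧ V ⊆ W ^ 248 := by
  obtain ⟨n, f, hf, hfW⟩ := hsynd.exists_orthonormal_fixator_subset_pow_forty hinf hsym
  exact hsynd.exists_isOpen_subset_pow hinf hsym hf hfW

/-- If `H` is an infinite-dimensional separable real Hilbert space and `W` is a symmetric,
countably syndetic subset of the orthogonal group `O(H)`, then `W ^ 506` contains an open
neighborhood of the identity in the strong operator topology. -/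
theorem steinhaus_orthogonalGroup
    {H : Type*} [NormedAddCommGroup H] [InnerProductSpace ℝ H] [CompleteSpace H]
    [TopologicalSpace.SeparableSpace H] (hinf : ¬ FiniteDimensional ℝ H)
    (W : Set (H ≃ₗᵢ[ℝ] H)) (hsym : W⁻¹ = W)
    (hsynd : ∃ s : ℕ → (H ≃ₗᵢ[ℝ] H), ∀ g : (H ≃ₗᵢ[ℝ] H), ∃ n : ℕ, g ∈ s n • W) :
    ∃ V : Set (H ≃ₗᵢ[ℝ] H),
      IsOpen[strongOperatorTopology ℝ H] V ∧ (1 : (H ≃ₗᵢ[ℝ] H)) ∈ V ∧ V ⊆ W ^ 506 := by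
  obtain ⟨V, hV, h1V, hVW⟩ := steinhaus_orthogonalGroup_general hinf hsym hsynd
  exact ⟨V, hV, h1V, hVW.trans <|
    CountablySyndetic.pow_two_mul_subset (m := 124) (n := 253) hsynd hsym (by norm_num)⟩
end
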